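/- arXiv:1206.1671 — 2 statements merged into one kernel-verified Lean document; each statement's English description precedes it below -/
import Mathlib

section
/- Let (B_t)_{t≥0} be a standard real Brownian motion, let c > 0, β > 0, and τ = inf{u > 0 : B_u − c·u > β}. Let W¹, W², W³ be three independent standard real Brownian motions, and set R_s = |(β + W¹_s, W²_s, W³_s)| (the Euclidean norm in ℝ³), so that R is a 3-dimensional Bessel process started from β. Then for every t > 0, the law of the path (β + c·s − B_s)_{s∈[0,t]} under the probability measure with density (1/β)·(β + c·t − B_t)·1_{τ > t}·e^{c·B_t − c²t/2} with respect to P equals the law of the path (R_s)_{s∈[0,t]}. -/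
open MeasureTheory ProbabilityTheory Filter
open scoped NNReal

noncomputable section



lemma gint {h : ℝ≥0} (hh : 0 < h) {f : ℝ → ENNReal} (hf : Measurable f) :
    ∫⁻ z, f z ∂(gaussianReal 0 h) = ∫⁻ z, ENNReal.ofReal (gaussianPDFReal 0 h z) * f z := by
  rw [gaussianReal_of_var_ne_zero _ hh.ne',
    lintegral_withDensity_eq_lintegral_mul _ (measurable_gaussianPDF _ _) hf]
  rfl

lemma tilt {h : ℝ≥0} (hh : 0 < h) (c : ℝ) {f : ℝ → ENNReal} (hf : Measurable f) :
    ∫⁻ z, f (c * h - z) * ENNReal.ofReal (Real.exp (c * z - c^2 * h / 2)) ∂(gaussianReal 0 h)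
      = ∫⁻ z, f z ∂(gaussianReal 0 h) := by
  rw [gint hh (by fun_prop), gint hh hf, ← lintegral_sub_left_eq_self _ (c * h)]
  refine lintegral_congr fun z => ?_
  have hne : (h : ℝ) ≠ 0 := by exact_mod_cast hh.ne'
  rw [sub_sub_cancel, mul_comm (f z), ← mul_assoc, ← ENNReal.ofReal_mul (gaussianPDFReal_nonneg _ _ _)]
  congr 2
  simp only [gaussianPDFReal]
  rw [mul_assoc, ← Real.exp_add]
  congr 2
  field_simp
  ring

/-- two dimensional Gaussian density as a function of squared norm -/
def D2 (h : ℝ≥0) (r : ℝ) : ENNReal :=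
  ENNReal.ofReal ((2 * Real.pi * h)⁻¹ * Real.exp (- r / (2 * h)))

lemma measurable_D2 (h : ℝ≥0) : Measurable (D2 h) := by unfold D2; fun_prop

lemma gint2 {h : ℝ≥0} (hh : 0 < h) {f : ℝ × ℝ → ENNReal} (hf : Measurable f) :
    ∫⁻ z, ∫⁻ w, f (z, w) ∂(gaussianReal 0 h) ∂(gaussianReal 0 h)
      = ∫⁻ p : ℝ × ℝ, D2 h (p.1^2 + p.2^2) * f p := by
  rw [gint hh hf.lintegral_prod_right']
  have hm : Measurable fun p : ℝ × ℝ => D2 h (p.1^2 + p.2^2) * f p :=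
    ((measurable_D2 h).comp (by fun_prop)).mul hf
  rw [Measure.volume_eq_prod, lintegral_prod _ hm.aemeasurable]
  refine lintegral_congr fun z => ?_
  rw [gint hh (by fun_prop), ← lintegral_const_mul _ (by fun_prop)]
  refine lintegral_congr fun w => ?_
  rw [← mul_assoc, ← ENNReal.ofReal_mul (gaussianPDFReal_nonneg _ _ _)]
  congr 1
  unfold D2
  congr 1
  simp only [gaussianPDFReal]
  have : (2 * Real.pi * h)⁻¹ = (√(2 * Real.pi * h))⁻¹ * (√(2 * Real.pi * h))⁻¹ := by
    rw [← mul_inv, Real.mul_self_sqrt (by positivity)]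
  rw [this, show -((z, w).1 ^ 2 + (z, w).2 ^ 2) / (2 * (h:ℝ)) =
    -(z - 0)^2 / (2 * h) + -(w-0)^2/(2*h) by simp; ring, Real.exp_add]
  ring

lemma gint2C {h : ℝ≥0} (hh : 0 < h) {g : ℝ → ENNReal} (hg : Measurable g) (a b : ℝ) :
    ∫⁻ z, ∫⁻ w, g ((a + z)^2 + (b + w)^2) ∂(gaussianReal 0 h) ∂(gaussianReal 0 h)
      = ∫⁻ ζ : ℂ, D2 h (‖ζ‖^2) * g (‖(⟨a, b⟩ : ℂ) + ζ‖^2) := by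
  rw [gint2 (f := fun p => g ((a + p.1)^2 + (b + p.2)^2)) hh (by fun_prop)]
  rw [← Complex.volume_preserving_equiv_real_prod.lintegral_comp_emb
    Complex.measurableEquivRealProd.measurableEmbedding]
  refine lintegral_congr fun ζ => ?_
  simp only [Complex.measurableEquivRealProd_apply, Complex.sq_norm, Complex.normSq_apply,
    Complex.add_re, Complex.add_im]
  simp only [sq]

lemma rot2 {h : ℝ≥0} (hh : 0 < h) {g : ℝ → ENNReal} (hg : Measurable g) (a b : ℝ) :
    ∫⁻ z, ∫⁻ w, g ((a + z)^2 + (b + w)^2) ∂(gaussianReal 0 h) ∂(gaussianReal 0 h)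
    = ∫⁻ z, ∫⁻ w, g ((√(a^2+b^2) + z)^2 + w^2) ∂(gaussianReal 0 h) ∂(gaussianReal 0 h) := by
  have h0 := gint2C hh hg (√(a^2+b^2)) 0
  simp only [zero_add] at h0
  rw [h0, gint2C hh hg a b]
  by_cases hab : (⟨a, b⟩ : ℂ) = 0
  · have := Complex.ext_iff.1 hab
    simp at this
    simp [this]
  set w : ℂ := ⟨a, b⟩ with hw
  have hn : ‖w‖ = √(a^2+b^2) := by
    rw [Complex.norm_def, Complex.normSq_apply]; simp [hw, sq]
  have hwn : ‖w‖ ≠ 0 := by simpa using hab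
  let u : Circle := ⟨w / ‖w‖, by
    simp [Submonoid.unitSphere, hwn]⟩
  have hu : (u : ℂ) = w / ‖w‖ := rfl
  rw [← (rotation u).measurePreserving.lintegral_comp_emb
    (rotation u).toHomeomorph.measurableEmbedding]
  refine lintegral_congr fun ζ => ?_
  have h1 : (⟨√(a^2+b^2), 0⟩ : ℂ) = (‖w‖ : ℂ) := by rw [hn]; rfl
  have hwc : (‖w‖ : ℂ) ≠ 0 := by exact_mod_cast hwn
  have h2 : w + rotation u ζ = u * ((‖w‖ : ℂ) + ζ) := by
    rw [rotation_apply, hu, mul_add, div_mul_cancel₀ _ hwc]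
  rw [h1, h2, norm_mul, Circle.norm_coe, one_mul, LinearIsometryEquiv.norm_map]

lemma polar2 {h : ℝ≥0} (hh : 0 < h) {g : ℝ → ENNReal} (hg : Measurable g) :
    ∫⁻ z, ∫⁻ w, g (z^2 + w^2) ∂(gaussianReal 0 h) ∂(gaussianReal 0 h)
    = ∫⁻ r in Set.Ioi (0:ℝ), ENNReal.ofReal (r / h * Real.exp (- r^2 / (2 * h))) * g (r^2) := by
  rw [gint2 (f := fun p => g (p.1^2 + p.2^2)) hh (by fun_prop)]
  rw [← lintegral_comp_polarCoord_symm]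
  have hm := measurable_D2 h
  rw [polarCoord_target, Measure.volume_eq_prod, ← Measure.prod_restrict, lintegral_prod _
    (by
      simp only [polarCoord_symm_apply, smul_eq_mul]
      fun_prop)]
  refine setLIntegral_congr_fun measurableSet_Ioi fun r hr => ?_
  have hr : 0 < r := hr
  have hpos : (0:ℝ) < h := by exact_mod_cast hh
  have : ∀ θ : ℝ, (r * Real.cos θ)^2 + (r * Real.sin θ)^2 = r^2 := by
    intro θ; nlinarith [Real.sin_sq_add_cos_sq θ]
  simp only [polarCoord_symm_apply, this, smul_eq_mul, lintegral_const, Measure.restrict_apply,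
    MeasurableSet.univ, Set.univ_inter, Real.volume_Ioo, D2]
  rw [← mul_assoc, ← ENNReal.ofReal_mul hr.le, mul_right_comm, ← ENNReal.ofReal_mul (by positivity)]
  congr 2
  have := Real.pi_pos
  field_simp
  ring

lemma radial {h : ℝ≥0} (hh : 0 < h) {f : ℝ → ENNReal} (y : ℝ) :
    ∫⁻ r in Set.Ioi (0:ℝ), ENNReal.ofReal (r / h * Real.exp (- r^2 / (2 * h))) * f (√(y^2 + r^2))
    = ∫⁻ R in Set.Ioi |y|, ENNReal.ofReal (R / h * Real.exp (- (R^2 - y^2) / (2 * h))) * f R := by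
  have himg : (fun r : ℝ => √(y^2 + r^2)) '' Set.Ioi 0 = Set.Ioi |y| := by
    ext R
    simp only [Set.mem_image, Set.mem_Ioi]
    constructor
    · rintro ⟨r, hr, rfl⟩
      rw [← Real.sqrt_sq_eq_abs]
      exact Real.sqrt_lt_sqrt (by positivity) (by nlinarith)
    · intro hR
      have hR0 := (abs_nonneg y).trans_lt hR
      have : y^2 < R^2 := by rw [sq_lt_sq, abs_of_pos hR0]; exact hR
      refine ⟨√(R^2 - y^2), Real.sqrt_pos.2 (by linarith), ?_⟩
      rw [Real.sq_sqrt (by linarith), add_sub_cancel, Real.sqrt_sq hR0.le]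
  rw [← himg, lintegral_image_eq_lintegral_abs_deriv_mul (f' := fun r => r / √(y^2+r^2))
    measurableSet_Ioi]
  · refine setLIntegral_congr_fun measurableSet_Ioi fun r hr => ?_
    have hr : 0 < r := hr
    have hs : 0 < √(y^2+r^2) := Real.sqrt_pos.2 (by positivity)
    rw [← mul_assoc, ← ENNReal.ofReal_mul (by positivity), abs_of_pos (by positivity),
      Real.sq_sqrt (by positivity)]
    congr 2
    have hpos : (0:ℝ) < h := by exact_mod_cast hh
    rw [add_sub_cancel_left]
    field_simp
  · intro r hr
    have hr : 0 < r := hr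
    have := (((hasDerivAt_id r).pow 2).const_add (y^2)).sqrt (by simp; positivity)
    have h2 : HasDerivAt (fun r : ℝ => √(y^2 + r^2)) (r / √(y^2+r^2)) r := by
      refine this.congr_deriv ?_
      simp
      field_simp
    exact h2.hasDerivWithinAt
  · intro r hr s hs hrs
    have hr : 0 < r := hr
    have hs : 0 < s := hs
    have hrs : √(y^2 + r^2) = √(y^2+s^2) := hrs
    rw [Real.sqrt_inj (by positivity) (by positivity)] at hrs
    nlinarith

lemma expint {h : ℝ≥0} (hh : 0 < h) {x : ℝ} (hx : 0 < x) (R : ℝ) :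
    ∫⁻ y in Set.Iic R, ENNReal.ofReal (Real.exp (- (x * (R - y)) / h)) = ENNReal.ofReal (h / x) := by
  have hpos : (0:ℝ) < h := by exact_mod_cast hh
  have e : ∀ y, Real.exp (- (x * (R - y)) / h) = Real.exp (-(x * R)/h) * Real.exp (x / h * y) := by
    intro y; rw [← Real.exp_add]; congr 1; field_simp; ring
  simp_rw [e]
  rw [← ofReal_integral_eq_lintegral_ofReal, integral_const_mul, integral_exp_mul_Iic (by positivity)]
  · congr 1
    rw [mul_div_assoc', ← Real.exp_add]
    rw [show -(x * R)/h + x / h * R = 0 by ring, Real.exp_zero]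
    field_simp
  · exact (integrableOn_exp_mul_Iic (by positivity) R).const_mul _
  · exact ae_of_all _ fun y => by positivity

lemma bessel_axis {h : ℝ≥0} (hh : 0 < h) {x : ℝ} (hx : 0 < x) {f : ℝ → ENNReal} (hf : Measurable f) :
    ENNReal.ofReal x * ∫⁻ z, ∫⁻ z1, ∫⁻ z2, f (√((x + z)^2 + (z1^2 + z2^2)))
      ∂(gaussianReal 0 h) ∂(gaussianReal 0 h) ∂(gaussianReal 0 h)
    ≤ ∫⁻ z, Set.indicator (Set.Ioi 0) (fun y => ENNReal.ofReal y * f y) (x + z)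
      ∂(gaussianReal 0 h) := by
  have hpos : (0:ℝ) < h := by exact_mod_cast hh
  have e1 : ∀ z, ∫⁻ z1, ∫⁻ z2, f (√((x + z)^2 + (z1^2 + z2^2)))
      ∂(gaussianReal 0 h) ∂(gaussianReal 0 h) =
      ∫⁻ R in Set.Ioi |x + z|, ENNReal.ofReal (R / h * Real.exp (- (R^2 - (x+z)^2) / (2 * h))) * f R := by
    intro z
    rw [polar2 (g := fun r => f (√((x + z)^2 + r))) hh (by fun_prop), radial hh]
  have e1' := lintegral_congr (μ := gaussianReal 0 h) e1
  rw [e1']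
  have hmeas : Measurable fun p : ℝ × ℝ => Set.indicator {q : ℝ × ℝ | |x + q.1| < q.2} (fun q =>
      ENNReal.ofReal (q.2 / h * Real.exp (- (q.2^2 - (x+q.1)^2) / (2 * h))) * f q.2) p := by
    refine Measurable.indicator (by fun_prop) ?_
    exact measurableSet_lt (by fun_prop) (by fun_prop)
  have e2 : ∀ z, ∫⁻ R in Set.Ioi |x + z|, ENNReal.ofReal (R / h * Real.exp (- (R^2 - (x+z)^2) / (2 * h))) * f R
      = ∫⁻ R, Set.indicator {q : ℝ × ℝ | |x + q.1| < q.2} (fun q =>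
      ENNReal.ofReal (q.2 / h * Real.exp (- (q.2^2 - (x+q.1)^2) / (2 * h))) * f q.2) (z, R) := by
    intro z
    rw [← lintegral_indicator measurableSet_Ioi]
    rfl
  simp_rw [e2]
  rw [lintegral_lintegral_swap hmeas.aemeasurable]
  rw [← lintegral_const_mul _ hmeas.lintegral_prod_left']
  have hmi : Measurable (Set.indicator (Set.Ioi (0:ℝ)) (fun y => ENNReal.ofReal y * f y)) :=
    Measurable.indicator (by fun_prop) measurableSet_Ioi
  rw [gint hh (by fun_prop)]
  conv_rhs => rw [← lintegral_sub_right_eq_self _ x]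
  refine lintegral_mono fun R => ?_
  simp only [add_sub_cancel]
  by_cases hR : 0 < R
  swap
  · have : ∀ z, Set.indicator {q : ℝ × ℝ | |x + q.1| < q.2} (fun q =>
      ENNReal.ofReal (q.2 / h * Real.exp (- (q.2^2 - (x+q.1)^2) / (2 * h))) * f q.2) (z, R) = 0 := by
      intro z
      rw [Set.indicator_of_notMem]
      simp only [Set.mem_ofPred_eq, not_lt]
      exact (not_lt.1 hR).trans (abs_nonneg _)
    rw [lintegral_congr this]
    simp
  have hRm : R ∈ Set.Ioi (0:ℝ) := hR
  rw [Set.indicator_of_mem hRm, gint hh (by fun_prop), ← lintegral_sub_right_eq_self _ x]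
  calc _ ≤ ENNReal.ofReal x * ∫⁻ y in Set.Iic R,
        ENNReal.ofReal (Real.exp (- (x * (R - y)) / h)) *
          (ENNReal.ofReal (gaussianPDFReal 0 h (R - x)) * (ENNReal.ofReal (R / h) * f R)) := by
        refine mul_le_mul_right ?_ _
        rw [← lintegral_indicator measurableSet_Iic]
        refine lintegral_mono fun y => ?_
        simp only [add_sub_cancel]
        by_cases hy : |y| < R
        · rw [Set.indicator_of_mem (show (y - x, R) ∈ {q : ℝ × ℝ | |x + q.1| < q.2} by simpa using hy),
            Set.indicator_of_mem (show y ∈ Set.Iic R from (le_abs_self y).trans hy.le)]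
          simp only [add_sub_cancel]
          apply le_of_eq
          rw [← mul_assoc, ← mul_assoc, ← mul_assoc,
            ← ENNReal.ofReal_mul (gaussianPDFReal_nonneg _ _ _),
            ← ENNReal.ofReal_mul (by positivity), ← ENNReal.ofReal_mul (mul_nonneg (by positivity) (gaussianPDFReal_nonneg _ _ _))]
          congr 2
          simp only [gaussianPDFReal]
          have : Real.exp (-(y - x - 0)^2 / (2 * h)) * Real.exp (-(R^2 - y^2)/(2*h)) =
            Real.exp (-(x * (R - y)) / h) * Real.exp (-(R - x - 0)^2 / (2 * h)) := by
            rw [← Real.exp_add, ← Real.exp_add]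
            congr 1
            field_simp
            ring
          linear_combination (√(2 * Real.pi * h))⁻¹ * (R / h) * this
        · rw [Set.indicator_of_notMem (by simpa using hy)]
          simp
    _ = _ := by
        rw [lintegral_mul_const _ (by fun_prop), expint hh hx, mul_left_comm (ENNReal.ofReal (h/x)),
          mul_left_comm (ENNReal.ofReal x), ← mul_assoc (ENNReal.ofReal (h/x)),
          ← mul_assoc (ENNReal.ofReal x), ← ENNReal.ofReal_mul (by positivity),
          ← ENNReal.ofReal_mul (by positivity)]
        congr 3
        field_simp

lemma bessel_step {h : ℝ≥0} (hh : 0 < h) (a b d : ℝ) (hx : 0 < √(a^2+b^2+d^2))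
    {f : ℝ → ENNReal} (hf : Measurable f) :
    ENNReal.ofReal √(a^2+b^2+d^2) * ∫⁻ z, ∫⁻ z1, ∫⁻ z2, f (√((a + z)^2 + (b + z1)^2 + (d + z2)^2))
      ∂(gaussianReal 0 h) ∂(gaussianReal 0 h) ∂(gaussianReal 0 h)
    ≤ ∫⁻ z, Set.indicator (Set.Ioi 0) (fun y => ENNReal.ofReal y * f y) (√(a^2+b^2+d^2) + z)
      ∂(gaussianReal 0 h) := by
  refine le_trans (le_of_eq ?_) (bessel_axis hh hx hf)
  congr 1
  have e1 : ∀ z, ∫⁻ z1, ∫⁻ z2, f (√((a + z)^2 + (b + z1)^2 + (d + z2)^2))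
      ∂(gaussianReal 0 h) ∂(gaussianReal 0 h) =
      ∫⁻ z1, ∫⁻ z2, f (√((a + z)^2 + ((√(b^2+d^2) + z1)^2 + z2^2)))
      ∂(gaussianReal 0 h) ∂(gaussianReal 0 h) := by
    intro z
    simp_rw [add_assoc]
    exact rot2 (g := fun r => f (√((a + z)^2 + r))) hh (by fun_prop) b d
  have e2 := lintegral_congr (μ := gaussianReal 0 h) e1
  rw [e2]
  have e3 : ∀ A B : ℝ, ∫⁻ z, ∫⁻ z1, ∫⁻ z2, f (√((A + z)^2 + ((B + z1)^2 + z2^2)))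
      ∂(gaussianReal 0 h) ∂(gaussianReal 0 h) ∂(gaussianReal 0 h) =
      ∫⁻ z2, ∫⁻ z, ∫⁻ z1, f (√(((A + z)^2 + (B + z1)^2) + z2^2))
      ∂(gaussianReal 0 h) ∂(gaussianReal 0 h) ∂(gaussianReal 0 h) := by
    intro A B
    conv_rhs => rw [lintegral_lintegral_swap (by
      apply Measurable.aemeasurable
      apply Measurable.lintegral_prod_right' (f := fun q : (ℝ × ℝ) × ℝ =>
        f (√(((A + q.1.2)^2 + (B + q.2)^2) + q.1.1^2)))
      fun_prop)]
    refine lintegral_congr fun z => ?_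
    rw [lintegral_lintegral_swap (by fun_prop)]
    simp_rw [add_assoc]
  have e4 := e3 (√(a^2+b^2+d^2)) 0
  simp only [zero_add] at e4
  rw [e3, e4]
  refine lintegral_congr fun z => ?_
  have := rot2 (g := fun r => f (√(r + z^2))) hh (by fun_prop) a (√(b^2+d^2))
  rw [this, Real.sq_sqrt (by positivity), add_assoc (a^2)]



lemma indep_lint {Ω E : Type*} [MeasurableSpace Ω] [MeasurableSpace E] {P : Measure Ω}
    [IsProbabilityMeasure P] {Y : Ω → E} {Z : Ω → ℝ} {γ : Measure ℝ} (hY : Measurable Y)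
    (hZ : Measurable Z) (hind : IndepFun Z Y P) (hlaw : P.map Z = γ)
    {Ψ : E × ℝ → ENNReal} (hΨ : Measurable Ψ) :
    ∫⁻ ω, Ψ (Y ω, Z ω) ∂P = ∫⁻ ω, ∫⁻ z, Ψ (Y ω, z) ∂γ ∂P := by
  subst hlaw
  have h := (indepFun_iff_map_prod_eq_prod_map_map hY.aemeasurable hZ.aemeasurable).1 hind.symm
  have e1 : ∫⁻ ω, Ψ (Y ω, Z ω) ∂P = ∫⁻ q, Ψ q ∂(P.map fun ω => (Y ω, Z ω)) :=
    (lintegral_map hΨ (hY.prodMk hZ)).symm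
  rw [e1, h, lintegral_prod _ hΨ.aemeasurable, lintegral_map hΨ.lintegral_prod_right' hY]

lemma indep_assoc {Ω E F G : Type*} [MeasurableSpace Ω] [MeasurableSpace E] [MeasurableSpace F]
    [MeasurableSpace G] {P : Measure Ω} [IsProbabilityMeasure P]
    {Z : Ω → E} {Y : Ω → F} {V : Ω → G} (hZ : Measurable Z) (hY : Measurable Y) (hV : Measurable V)
    (h1 : IndepFun Z Y P) (h2 : IndepFun (fun ω => (Z ω, Y ω)) V P) :
    IndepFun Z (fun ω => (Y ω, V ω)) P := by
  have h3 : IndepFun Y V P := h2.comp (φ := Prod.snd) (ψ := id) measurable_snd measurable_id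
  rw [indepFun_iff_map_prod_eq_prod_map_map (by fun_prop) (by fun_prop)] at h1 h2 h3 ⊢
  have : P.map (fun ω => (Z ω, (Y ω, V ω))) =
      (P.map (fun ω => ((Z ω, Y ω), V ω))).map MeasurableEquiv.prodAssoc := by
    rw [Measure.map_map (by fun_prop) (by fun_prop)]
    rfl
  rw [this, h2, h1, h3, Measure.prodAssoc_prod]

/-- the path up to time `s` -/
def pst {Ω : Type*} (V : ℝ≥0 → Ω → ℝ) (s : ℝ≥0) (ω : Ω) : ℝ≥0 → ℝ := fun v => V (min v s) ω

lemma measurable_pst {Ω : Type*} [MeasurableSpace Ω] {V : ℝ≥0 → Ω → ℝ} (hV : ∀ t, Measurable (V t))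
    (s : ℝ≥0) : Measurable (pst V s) := measurable_pi_lambda _ fun _ => hV _

lemma indep_pst {Ω : Type*} [m0 : MeasurableSpace Ω] {P : Measure Ω} {V : ℝ≥0 → Ω → ℝ} {s u : ℝ≥0}
    (h : Indep (MeasurableSpace.comap (fun ω => V u ω - V s ω) inferInstance)
        (⨆ u ∈ Set.Iic s, MeasurableSpace.comap (V u) inferInstance) P) :
    IndepFun (fun ω => V u ω - V s ω) (pst V s) P := by
  rw [IndepFun_iff_Indep]
  refine indep_of_indep_of_le_right h ?_
  simp only [MeasurableSpace.pi, MeasurableSpace.comap_iSup, MeasurableSpace.comap_comp]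
  refine iSup_le fun v => ?_
  exact le_iSup₂_of_le (min v s) (by simp) le_rfl

section W
variable {Ω : Type*} [m0 : MeasurableSpace Ω] {P : Measure Ω} [IsProbabilityMeasure P]
    {W : Fin 3 → ℝ≥0 → Ω → ℝ}

lemma indepW_aux
    (hWmeas : ∀ i t, Measurable (W i t))
    (hWindepincr : ∀ i, ∀ s t : ℝ≥0, s ≤ t →
      Indep (MeasurableSpace.comap (fun ω => W i t ω - W i s ω) inferInstance)
        (⨆ u ∈ Set.Iic s, MeasurableSpace.comap (W i u) inferInstance) P)
    (hWindep : iIndep (fun i : Fin 3 =>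
        ⨆ t : ℝ≥0, MeasurableSpace.comap (W i t) inferInstance) P)
    {s u : ℝ≥0} (hsu : s ≤ u) (i j k : Fin 3) (hij : i ≠ j) (hik : i ≠ k)
    (hall : ∀ l, l = i ∨ l = j ∨ l = k) :
    IndepFun (fun ω => W i u ω - W i s ω)
      (fun ω => ((fun l => pst (W l) s ω : Fin 3 → ℝ≥0 → ℝ),
        W j u ω - W j s ω, W k u ω - W k s ω)) P := by
  let F : Fin 3 → Ω → (ℝ≥0 → ℝ) := fun l ω v => W l v ω
  have hFm : ∀ l, Measurable (F l) := fun l => measurable_pi_lambda _ fun v => hWmeas l v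
  have hF : iIndepFun F P := by
    rw [iIndepFun_iff_iIndep]
    refine iIndep_of_iIndep_of_le hWindep fun l => ?_
    simp only [MeasurableSpace.pi, MeasurableSpace.comap_iSup, MeasurableSpace.comap_comp]
    refine iSup_le fun v => ?_
    exact le_iSup_of_le v le_rfl
  have h1 := indep_pst (hWindepincr i s u hsu)
  have h2 : IndepFun (F i) (fun ω => (F j ω, F k ω)) P :=
    (hF.indepFun_prodMk hFm j k i hij.symm hik.symm).symm
  have h3 : IndepFun (fun ω => (W i u ω - W i s ω, pst (W i) s ω)) (fun ω => (F j ω, F k ω)) P := by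
    refine h2.comp (φ := fun p : ℝ≥0 → ℝ => (p u - p s, fun v => p (min v s))) (ψ := id) ?_ measurable_id
    fun_prop
  have h4 := indep_assoc (by have := hWmeas i; fun_prop) (measurable_pst (hWmeas i) s)
    ((hFm j).prodMk (hFm k)) h1 h3
  let ψ : (ℝ≥0 → ℝ) × (ℝ≥0 → ℝ) × (ℝ≥0 → ℝ) → (Fin 3 → ℝ≥0 → ℝ) × ℝ × ℝ := fun q =>
    ((fun l v => if l = i then q.1 v else if l = j then q.2.1 (min v s) else q.2.2 (min v s)),
      q.2.1 u - q.2.1 s, q.2.2 u - q.2.2 s)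
  have hψ : Measurable ψ := by
    refine Measurable.prodMk ?_ (by fun_prop)
    refine measurable_pi_lambda _ fun l => measurable_pi_lambda _ fun v => ?_
    split_ifs <;> fun_prop
  have h5 := h4.comp (φ := id) (ψ := ψ) measurable_id hψ
  suffices e : (fun ω => ((fun l => pst (W l) s ω : Fin 3 → ℝ≥0 → ℝ),
      W j u ω - W j s ω, W k u ω - W k s ω)) = ψ ∘ (fun ω => (pst (W i) s ω, F j ω, F k ω)) by
    rw [e]; exact h5
  funext ω
  refine Prod.ext ?_ rfl
  funext l v
  simp only [pst, Function.comp, ψ, F]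
  split_ifs with a b
  · rw [a]
  · rw [b]
  · rw [((hall l).resolve_left a).resolve_left b]

lemma stepW
    (hWmeas : ∀ i t, Measurable (W i t))
    (hWgauss : ∀ i, ∀ s t : ℝ≥0, s ≤ t →
      Measure.map (fun ω => W i t ω - W i s ω) P = gaussianReal 0 (t - s))
    (hWindepincr : ∀ i, ∀ s t : ℝ≥0, s ≤ t →
      Indep (MeasurableSpace.comap (fun ω => W i t ω - W i s ω) inferInstance)
        (⨆ u ∈ Set.Iic s, MeasurableSpace.comap (W i u) inferInstance) P)
    (hWindep : iIndep (fun i : Fin 3 =>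
        ⨆ t : ℝ≥0, MeasurableSpace.comap (W i t) inferInstance) P)
    {s u : ℝ≥0} (hsu : s ≤ u)
    {Ψ : (Fin 3 → ℝ≥0 → ℝ) × ℝ × ℝ × ℝ → ENNReal} (hΨ : Measurable Ψ) :
    ∫⁻ ω, Ψ ((fun l => pst (W l) s ω), W 0 u ω - W 0 s ω, W 1 u ω - W 1 s ω, W 2 u ω - W 2 s ω) ∂P
    = ∫⁻ ω, ∫⁻ z0, ∫⁻ z1, ∫⁻ z2, Ψ ((fun l => pst (W l) s ω), z0, z1, z2)
      ∂(gaussianReal 0 (u - s)) ∂(gaussianReal 0 (u - s)) ∂(gaussianReal 0 (u - s)) ∂P := by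
  have hd : ∀ i, Measurable (fun ω => W i u ω - W i s ω) := fun i => (hWmeas i u).sub (hWmeas i s)
  have hp : Measurable (fun ω => (fun l => pst (W l) s ω : Fin 3 → ℝ≥0 → ℝ)) :=
    measurable_pi_lambda _ fun l => measurable_pst (hWmeas l) s
  have i2 : IndepFun (fun ω => W 2 u ω - W 2 s ω) (fun ω => ((fun l => pst (W l) s ω : Fin 3 → ℝ≥0 → ℝ),
        W 0 u ω - W 0 s ω, W 1 u ω - W 1 s ω)) P :=
    indepW_aux hWmeas hWindepincr hWindep hsu 2 0 1 (by decide) (by decide) (by decide)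
  have i1 : IndepFun (fun ω => W 1 u ω - W 1 s ω) (fun ω => ((fun l => pst (W l) s ω : Fin 3 → ℝ≥0 → ℝ),
        W 0 u ω - W 0 s ω)) P :=
    (indepW_aux hWmeas hWindepincr hWindep hsu 1 0 2 (by decide) (by decide) (by decide)).comp
      (φ := id) (ψ := fun q : (Fin 3 → ℝ≥0 → ℝ) × ℝ × ℝ => (q.1, q.2.1)) measurable_id (by fun_prop)
  have i0 : IndepFun (fun ω => W 0 u ω - W 0 s ω) (fun ω => (fun l => pst (W l) s ω : Fin 3 → ℝ≥0 → ℝ)) P :=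
    (indepW_aux hWmeas hWindepincr hWindep hsu 0 1 2 (by decide) (by decide) (by decide)).comp
      (φ := id) (ψ := fun q : (Fin 3 → ℝ≥0 → ℝ) × ℝ × ℝ => q.1) measurable_id (by fun_prop)
  have s2 := indep_lint (hp.prodMk ((hd 0).prodMk (hd 1))) (hd 2) i2 (hWgauss 2 s u hsu)
    (Ψ := fun q => Ψ (q.1.1, q.1.2.1, q.1.2.2, q.2)) (by fun_prop)
  have m2 : Measurable (fun q : ((Fin 3 → ℝ≥0 → ℝ) × ℝ) × ℝ =>
      ∫⁻ z2, Ψ (q.1.1, q.1.2, q.2, z2) ∂(gaussianReal 0 (u - s))) := by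
    apply Measurable.lintegral_prod_right' (f := fun r : (((Fin 3 → ℝ≥0 → ℝ) × ℝ) × ℝ) × ℝ =>
      Ψ (r.1.1.1, r.1.1.2, r.1.2, r.2))
    fun_prop
  have s1 := indep_lint (hp.prodMk (hd 0)) (hd 1) i1 (hWgauss 1 s u hsu) m2
  have m1 : Measurable (fun q : (Fin 3 → ℝ≥0 → ℝ) × ℝ =>
      ∫⁻ z1, ∫⁻ z2, Ψ (q.1, q.2, z1, z2) ∂(gaussianReal 0 (u - s)) ∂(gaussianReal 0 (u - s))) :=
    m2.lintegral_prod_right'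
  have s0 := indep_lint hp (hd 0) i0 (hWgauss 0 s u hsu) m1
  exact s2.trans (s1.trans s0)

end W

/-- the drifted process -/
def XX {Ω : Type*} (c β : ℝ) (B : ℝ≥0 → Ω → ℝ) (u : ℝ≥0) (ω : Ω) : ℝ := β + c * (u : ℝ) - B u ω
/-- Girsanov density -/
def MM {Ω : Type*} (c : ℝ) (B : ℝ≥0 → Ω → ℝ) (u : ℝ≥0) (ω : Ω) : ENNReal :=
  ENNReal.ofReal (Real.exp (c * B u ω - c^2 * (u:ℝ) / 2))

section B
variable {Ω : Type*} [m0 : MeasurableSpace Ω] {P : Measure Ω} [IsProbabilityMeasure P]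
    {B : ℝ≥0 → Ω → ℝ}

lemma measurable_XX (c β : ℝ) (hBmeas : ∀ t, Measurable (B t)) (u : ℝ≥0) : Measurable (XX c β B u) :=
  measurable_const.sub (hBmeas u)

lemma measurable_MM (c : ℝ) (hBmeas : ∀ t, Measurable (B t)) (u : ℝ≥0) : Measurable (MM c B u) := by
  have := hBmeas u
  unfold MM
  fun_prop

lemma stepB
    (hBmeas : ∀ t, Measurable (B t))
    (hBgauss : ∀ s t : ℝ≥0, s ≤ t →
      Measure.map (fun ω => B t ω - B s ω) P = gaussianReal 0 (t - s))
    (hBindep : ∀ s t : ℝ≥0, s ≤ t →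
      Indep (MeasurableSpace.comap (fun ω => B t ω - B s ω) inferInstance)
        (⨆ u ∈ Set.Iic s, MeasurableSpace.comap (B u) inferInstance) P)
    (c β : ℝ) {s u : ℝ≥0} (hsu : s < u) {Φ : (ℝ≥0 → ℝ) × ℝ → ENNReal} (hΦ : Measurable Φ) :
    ∫⁻ ω, Φ (pst (XX c β B) s ω, XX c β B u ω) * MM c B u ω ∂P
    = ∫⁻ ω, MM c B s ω * ∫⁻ z, Φ (pst (XX c β B) s ω, XX c β B s ω + z)
        ∂(gaussianReal 0 (u - s)) ∂P := by
  have hh : 0 < u - s := tsub_pos_of_lt hsu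
  have hcast : ((u - s : ℝ≥0) : ℝ) = u - s := NNReal.coe_sub hsu.le
  let Ψ : (ℝ≥0 → ℝ) × ℝ → ENNReal := fun q =>
    ENNReal.ofReal (Real.exp (c * q.1 s - c^2 * (s:ℝ) / 2)) *
    (Φ ((fun v => β + c * ((min v s : ℝ≥0) : ℝ) - q.1 v), (β + c * s - q.1 s) + (c * (u - s : ℝ≥0) - q.2))
      * ENNReal.ofReal (Real.exp (c * q.2 - c^2 * (u - s : ℝ≥0) / 2)))
  have hΨ : Measurable Ψ := by
    refine Measurable.mul (by fun_prop) (Measurable.mul (hΦ.comp ?_) (by fun_prop))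
    refine Measurable.prodMk (measurable_pi_lambda _ fun v => by fun_prop) (by fun_prop)
  have key := indep_lint (measurable_pst hBmeas s) ((hBmeas u).sub (hBmeas s))
    (indep_pst (hBindep s u hsu.le)) (hBgauss s u hsu.le) hΨ
  have hb : ∀ ω, pst B s ω s = B s ω := fun ω => by simp [pst]
  have hx : ∀ ω, (fun v => β + c * ((min v s : ℝ≥0) : ℝ) - pst B s ω v) = pst (XX c β B) s ω :=
    fun ω => rfl
  refine Eq.trans (lintegral_congr fun ω => ?_) (key.trans (lintegral_congr fun ω => ?_))
  · simp only [Ψ, hb, hx, Pi.sub_apply]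
    rw [mul_left_comm, ← ENNReal.ofReal_mul (by positivity), ← Real.exp_add]
    unfold MM XX
    rw [hcast]
    congr 4
    · ring
    · ring
  · simp only [Ψ, hb, hx]
    rw [lintegral_const_mul]
    · rw [tilt (f := fun z => Φ (pst (XX c β B) s ω, β + c * s - B s ω + z)) hh c (by fun_prop)]
      rfl
    · fun_prop

end B

lemma fourth (h : ℝ≥0) :
    ∫ z, z^4 ∂(gaussianReal 0 h) = (h:ℝ)^2 * ∫ z, z^4 ∂(gaussianReal 0 1) := by
  have := gaussianReal_map_const_mul (μ := 0) (v := 1) (√(h:ℝ))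
  have e : gaussianReal 0 h = (gaussianReal 0 1).map (√(h:ℝ) * ·) := by
    rw [this]
    congr 1
    · simp
    · ext; simp
  rw [e, integral_map (by fun_prop) (by fun_prop), ← integral_const_mul]
  refine integral_congr_ae (ae_of_all _ fun z => ?_)
  simp only [mul_pow]
  rw [show √(h:ℝ)^4 = (√(h:ℝ)^2)^2 by ring, Real.sq_sqrt (NNReal.coe_nonneg h)]

lemma overshoot (h : ℝ≥0) {ε x : ℝ} (hε : 0 < ε) (hx : 0 ≤ x) :
    ∫⁻ z, Set.indicator (Set.Ici 0) (fun y => ENNReal.ofReal (y + ε)) (x + z) ∂(gaussianReal 0 h)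
    ≤ ENNReal.ofReal (x + ε) +
      ENNReal.ofReal ((h:ℝ)^2 * (∫ z, z^4 ∂(gaussianReal 0 1)) / ε^3) := by
  have i1 : Integrable (fun z : ℝ => z) (gaussianReal 0 h) :=
    (memLp_id_gaussianReal' 1 (by simp)).integrable le_rfl
  have i4 : Integrable (fun z : ℝ => z^4) (gaussianReal 0 h) := by
    have := (memLp_id_gaussianReal' (μ := 0) (v := h) 4 (by simp)).integrable_norm_pow (by norm_num)
    refine this.congr (ae_of_all _ fun z => ?_)
    simp only [id, Real.norm_eq_abs]
    exact (by decide : Even 4).pow_abs z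
  have hpt : ∀ z, 0 ≤ x + z + ε + z^4 / ε^3 ∨ 0 ≤ x + z := by
    intro z
    by_cases hz : -ε ≤ z
    · left
      have : 0 ≤ z^4 / ε^3 := by positivity
      linarith
    · left
      push Not at hz
      have : -z ≤ z^4 / ε^3 := by
        rw [le_div_iff₀ (by positivity)]
        have h3 : ε^3 ≤ (-z)^3 := by gcongr; linarith
        nlinarith
      linarith
  have hpt' : ∀ z, 0 ≤ x + z + ε + z^4 / ε^3 := by
    intro z
    rcases hpt z with h | h
    · exact h
    · positivity
  have hi : Integrable (fun z => x + z + ε + z^4 / ε^3) (gaussianReal 0 h) :=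
    (((integrable_const x).add i1).add (integrable_const ε)).add (i4.div_const _)
  calc _ ≤ ∫⁻ z, ENNReal.ofReal (x + z + ε + z^4 / ε^3) ∂(gaussianReal 0 h) := by
        refine lintegral_mono fun z => ?_
        by_cases hz : x + z ∈ Set.Ici (0:ℝ)
        · rw [Set.indicator_of_mem hz]
          apply ENNReal.ofReal_le_ofReal
          have : 0 ≤ z^4 / ε^3 := by positivity
          linarith
        · rw [Set.indicator_of_notMem hz]; exact zero_le
    _ = ENNReal.ofReal (∫ z, (x + z + ε + z^4 / ε^3) ∂(gaussianReal 0 h)) :=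
        (ofReal_integral_eq_lintegral_ofReal hi (ae_of_all _ hpt')).symm
    _ = ENNReal.ofReal ((x + ε) + (h:ℝ)^2 * (∫ z, z^4 ∂(gaussianReal 0 1)) / ε^3) := by
        congr 1
        have j1 : Integrable (fun z : ℝ => x + z) (gaussianReal 0 h) := (integrable_const x).add i1
        have j2 : Integrable (fun z : ℝ => x + z + ε) (gaussianReal 0 h) := j1.add (integrable_const ε)
        rw [integral_add j2 (i4.div_const _), integral_add j1 (integrable_const ε),
          integral_add (integrable_const x) i1, integral_div, fourth]
        simp [integral_id_gaussianReal]
    _ ≤ _ := ENNReal.ofReal_add_le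



/-- the three-dimensional Bessel process -/
def RR {Ω : Type*} (β : ℝ) (W : Fin 3 → ℝ≥0 → Ω → ℝ) (u : ℝ≥0) (ω : Ω) : ℝ :=
  Real.sqrt ((β + W 0 u ω)^2 + (W 1 u ω)^2 + (W 2 u ω)^2)

lemma measurable_RR {Ω : Type*} [MeasurableSpace Ω] (β : ℝ) {W : Fin 3 → ℝ≥0 → Ω → ℝ}
    (hW : ∀ i t, Measurable (W i t)) (u : ℝ≥0) : Measurable (RR β W u) := by
  have h0 := hW 0 u
  have h1 := hW 1 u
  have h2 := hW 2 u
  unfold RR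
  fun_prop

/-- restriction of a path to a finite set of times -/
def resJ (J : Finset ℝ≥0) (p : ℝ≥0 → ℝ) : ℝ≥0 → ℝ := fun v => if v ∈ J then p v else 0

lemma measurable_resJ (J : Finset ℝ≥0) : Measurable (resJ J) := by
  refine measurable_pi_lambda _ fun v => ?_
  unfold resJ
  split_ifs <;> fun_prop

/-- restriction of a process to a finite set of times -/
def pj {Ω : Type*} (J : Finset ℝ≥0) (V : ℝ≥0 → Ω → ℝ) (ω : Ω) : ℝ≥0 → ℝ := resJ J (fun v => V v ω)

lemma pj_eq {Ω : Type*} {J : Finset ℝ≥0} {s : ℝ≥0} (hs : ∀ j ∈ J, j ≤ s) (V : ℝ≥0 → Ω → ℝ) (ω : Ω) :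
    resJ J (pst V s ω) = pj J V ω := by
  funext v
  unfold pj resJ pst
  split_ifs with h
  · rw [min_eq_left (hs v h)]
  · rfl

lemma pj_insert {Ω : Type*} (J : Finset ℝ≥0) (u : ℝ≥0) (V : ℝ≥0 → Ω → ℝ) (ω : Ω) :
    pj (insert u J) V ω = Function.update (pj J V ω) u (V u ω) := by
  funext v
  by_cases h : v = u
  · subst h; simp [pj, resJ]
  · simp [pj, resJ, h]

lemma measurable_upd (u : ℝ≥0) :
    Measurable (fun q : (ℝ≥0 → ℝ) × ℝ => Function.update q.1 u q.2) := by
  refine measurable_pi_lambda _ fun v => ?_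
  by_cases h : v = u
  · subst h; simpa using measurable_snd
  · simp only [Function.update_of_ne h]; fun_prop

section ind
variable {Ω : Type*} [m0 : MeasurableSpace Ω] {P : Measure Ω} [IsProbabilityMeasure P]
    {W : Fin 3 → ℝ≥0 → Ω → ℝ} {B : ℝ≥0 → Ω → ℝ}

lemma law_le
    (hBmeas : ∀ t, Measurable (B t))
    (hB0 : ∀ᵐ ω ∂P, B 0 ω = 0)
    (hBgauss : ∀ s t : ℝ≥0, s ≤ t →
      Measure.map (fun ω => B t ω - B s ω) P = gaussianReal 0 (t - s))
    (hBindep : ∀ s t : ℝ≥0, s ≤ t →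
      Indep (MeasurableSpace.comap (fun ω => B t ω - B s ω) inferInstance)
        (⨆ u ∈ Set.Iic s, MeasurableSpace.comap (B u) inferInstance) P)
    (hWmeas : ∀ i t, Measurable (W i t))
    (hW0 : ∀ i, ∀ᵐ ω ∂P, W i 0 ω = 0)
    (hWgauss : ∀ i, ∀ s t : ℝ≥0, s ≤ t →
      Measure.map (fun ω => W i t ω - W i s ω) P = gaussianReal 0 (t - s))
    (hWindepincr : ∀ i, ∀ s t : ℝ≥0, s ≤ t →
      Indep (MeasurableSpace.comap (fun ω => W i t ω - W i s ω) inferInstance)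
        (⨆ u ∈ Set.Iic s, MeasurableSpace.comap (W i u) inferInstance) P)
    (hWindep : iIndep (fun i : Fin 3 =>
        ⨆ t : ℝ≥0, MeasurableSpace.comap (W i t) inferInstance) P)
    (c β : ℝ) (hβ : 0 < β) (J : Finset ℝ≥0) :
    0 ∈ J → ∀ s ∈ J, (∀ j ∈ J, j ≤ s) → ∀ G : (ℝ≥0 → ℝ) → ENNReal, Measurable G →
      ∫⁻ ω, G (pj J (RR β W) ω) ∂P ≤
      ∫⁻ ω, Set.indicator {ω | ∀ j ∈ J, 0 < XX c β B j ω} (fun ω => G (pj J (XX c β B) ω) *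
        (ENNReal.ofReal (XX c β B s ω) * MM c B s ω * ENNReal.ofReal (1/β))) ω ∂P := by
  induction J using Finset.induction_on_max with
  | empty => simp
  | insert u J hJ ih =>
    intro h0 s' hs' hmax G hG
    have hsu : s' = u := by
      rcases Finset.mem_insert.1 hs' with h | h
      · exact h
      · exact absurd (hmax u (Finset.mem_insert_self _ _)) (not_le.2 (hJ _ h))
    subst hsu
    rename' s' => u
    rcases J.eq_empty_or_nonempty with rfl | hne
    · have hu : u = 0 := (by simpa using Finset.mem_insert.1 h0 : (0:ℝ≥0) = u).symm
      subst hu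
      refine lintegral_mono_ae ?_
      filter_upwards [hB0, hW0 0, hW0 1, hW0 2] with ω b w0 w1 w2
      have hX : XX c β B 0 ω = β := by simp [XX, b]
      have hR : RR β W 0 ω = β := by simp [RR, w0, w1, w2, Real.sqrt_sq hβ.le]
      have hp : pj (insert 0 ∅) (RR β W) ω = pj (insert 0 ∅) (XX c β B) ω := by
        funext v
        by_cases h : v = 0
        · subst h; simp [pj, resJ, hX, hR]
        · simp [pj, resJ, h]
      rw [Set.indicator_of_mem (by simpa [hX] using hβ), hp, hX]
      have hM : MM c B 0 ω = 1 := by simp [MM, b]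
      rw [hM, mul_one, ← ENNReal.ofReal_mul hβ.le]
      simp [hβ.ne']
    · have h0J : (0:ℝ≥0) ∈ J := by
        obtain ⟨x, hx⟩ := hne
        rcases Finset.mem_insert.1 h0 with h | h
        · exact absurd (hJ x hx) (by simp [← h])
        · exact h
      set s := J.max' hne with hsdef
      have hs : s ∈ J := J.max'_mem hne
      have hsm : ∀ j ∈ J, j ≤ s := fun j hj => J.le_max' j hj
      have hslt : s < u := hJ s hs
      have hh : 0 < u - s := tsub_pos_of_lt hslt
      let K : (ℝ≥0 → ℝ) → ENNReal := fun p => ∫⁻ z, Set.indicator (Set.Ioi 0)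
        (fun y => ENNReal.ofReal y * G (Function.update p u y)) (p s + z) ∂(gaussianReal 0 (u - s))
      have hΘ : Measurable (fun q : (ℝ≥0 → ℝ) × ℝ => Set.indicator (Set.Ioi 0)
          (fun y => ENNReal.ofReal y * G (Function.update q.1 u y)) q.2) := by
        have : (fun q : (ℝ≥0 → ℝ) × ℝ => Set.indicator (Set.Ioi 0)
          (fun y => ENNReal.ofReal y * G (Function.update q.1 u y)) q.2) =
          Set.indicator (Prod.snd ⁻¹' Set.Ioi 0)
            (fun q => ENNReal.ofReal q.2 * G (Function.update q.1 u q.2)) := by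
          funext q
          simp [Set.indicator]
        rw [this]
        refine Measurable.indicator ?_ (measurable_snd measurableSet_Ioi)
        exact Measurable.mul (by fun_prop) (hG.comp (measurable_upd u))
      have hK : Measurable K := by
        apply Measurable.lintegral_prod_right' (f := fun q : (ℝ≥0 → ℝ) × ℝ => Set.indicator (Set.Ioi 0)
          (fun y => ENNReal.ofReal y * G (Function.update q.1 u y)) (q.1 s + q.2))
        exact hΘ.comp (Measurable.prodMk (by fun_prop) (by fun_prop) :
          Measurable (fun q : (ℝ≥0 → ℝ) × ℝ => (q.1, q.1 s + q.2)))
      let G' : (ℝ≥0 → ℝ) → ENNReal := fun p => if p s ≤ 0 then ⊤ else (ENNReal.ofReal (p s))⁻¹ * K p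
      have hG' : Measurable G' := by
        refine Measurable.ite (measurableSet_le (by fun_prop) (by fun_prop)) (by fun_prop) ?_
        exact Measurable.mul (by fun_prop) hK
      have hIH := ih h0J s hs hsm G' hG'
      have hRs : ∀ ω, pj J (RR β W) ω s = RR β W s ω := fun ω => by simp [pj, resJ, hs]
      have hXs : ∀ ω, pj J (XX c β B) ω s = XX c β B s ω := fun ω => by simp [pj, resJ, hs]
      -- the left hand side
      have hL : ∫⁻ ω, G (pj (insert u J) (RR β W) ω) ∂P ≤ ∫⁻ ω, G' (pj J (RR β W) ω) ∂P := by
        let rad : (Fin 3 → ℝ≥0 → ℝ) → ℝ≥0 → ℝ := fun q v =>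
          Real.sqrt ((β + q 0 v)^2 + (q 1 v)^2 + (q 2 v)^2)
        have hrad : Measurable rad := by
          refine measurable_pi_lambda _ fun v => ?_
          fun_prop
        let Ψ : (Fin 3 → ℝ≥0 → ℝ) × ℝ × ℝ × ℝ → ENNReal := fun q =>
          G (Function.update (resJ J (rad q.1)) u (Real.sqrt ((β + q.1 0 s + q.2.1)^2 +
            (q.1 1 s + q.2.2.1)^2 + (q.1 2 s + q.2.2.2)^2)))
        have hΨ : Measurable Ψ := by
          refine hG.comp ((measurable_upd u).comp (Measurable.prodMk ?_ ?_))
          · exact (measurable_resJ J).comp (hrad.comp measurable_fst)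
          · fun_prop
        have key := stepW hWmeas hWgauss hWindepincr hWindep hslt.le hΨ
        have e1 : ∀ ω, resJ J (rad (fun l => pst (W l) s ω)) = pj J (RR β W) ω := fun ω =>
          pj_eq hsm (RR β W) ω
        have e2 : ∀ l ω, pst (W l) s ω s = W l s ω := fun l ω => by simp [pst]
        simp only [Ψ, e1, e2] at key
        have e3 : ∀ ω, Real.sqrt ((β + W 0 s ω + (W 0 u ω - W 0 s ω))^2 +
            (W 1 s ω + (W 1 u ω - W 1 s ω))^2 + (W 2 s ω + (W 2 u ω - W 2 s ω))^2) = RR β W u ω := by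
          intro ω
          unfold RR
          congr 4 <;> ring
        simp only [e3, ← pj_insert] at key
        rw [key]
        refine lintegral_mono fun ω => ?_
        simp only [G', hRs]
        split_ifs with hle
        · exact le_top
        · push Not at hle
          have := bessel_step hh (β + W 0 s ω) (W 1 s ω) (W 2 s ω) hle
            (f := fun y => G (Function.update (pj J (RR β W) ω) u y))
            (hG.comp ((measurable_upd u).comp (Measurable.prodMk measurable_const measurable_id)))
          have hne0 : ENNReal.ofReal (RR β W s ω) ≠ 0 := by simpa using hle
          rw [← ENNReal.mul_le_iff_le_inv hne0 ENNReal.ofReal_ne_top]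
          simp only [K, hRs]
          exact this
      refine hL.trans (hIH.trans ?_)
      let S : Set (ℝ≥0 → ℝ) := {p | ∀ j ∈ J, 0 < p j}
      have hS : MeasurableSet S := by
        have : S = ⋂ j ∈ J, {p | 0 < p j} := by ext; simp [S]
        rw [this]
        exact Finset.measurableSet_biInter _ fun j _ => measurableSet_lt (by fun_prop) (by fun_prop)
      let Φ : (ℝ≥0 → ℝ) × ℝ → ENNReal := fun q =>
        Set.indicator S (fun _ => ENNReal.ofReal (1/β)) q.1 * Set.indicator (Set.Ioi 0)
          (fun y => ENNReal.ofReal y * G (Function.update (resJ J q.1) u y)) q.2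
      have hΦ : Measurable Φ := by
        refine Measurable.mul ((measurable_const.indicator hS).comp measurable_fst) ?_
        exact hΘ.comp (((measurable_resJ J).comp measurable_fst).prodMk measurable_snd)
      have key := stepB hBmeas hBgauss hBindep c β hslt hΦ
      have hpS : ∀ ω, pst (XX c β B) s ω ∈ S ↔ ∀ j ∈ J, 0 < XX c β B j ω := by
        intro ω
        refine forall₂_congr fun j hj => ?_
        simp only [pst, min_eq_left (hsm j hj)]
      refine le_trans (le_of_eq ?_) (key.symm.le.trans (le_of_eq ?_))
      · refine lintegral_congr fun ω => ?_
        simp only [Φ, pj_eq hsm]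
        by_cases hω : ∀ j ∈ J, 0 < XX c β B j ω
        · rw [Set.indicator_of_mem (show ω ∈ {ω | ∀ j ∈ J, 0 < XX c β B j ω} from hω)]
          simp only [Set.indicator_of_mem ((hpS ω).2 hω)]
          rw [lintegral_const_mul]
          · have hpos := hω s hs
            simp only [G', hXs, if_neg (not_le.2 hpos), K]
            have hne0 : ENNReal.ofReal (XX c β B s ω) ≠ 0 := by simpa using hpos
            have := ENNReal.inv_mul_cancel hne0 ENNReal.ofReal_ne_top
            generalize ∫⁻ z, Set.indicator (Set.Ioi 0) (fun y => ENNReal.ofReal y *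
              G (Function.update (pj J (XX c β B) ω) u y)) (XX c β B s ω + z)
              ∂(gaussianReal 0 (u - s)) = k
            calc _ = ((ENNReal.ofReal (XX c β B s ω))⁻¹ * ENNReal.ofReal (XX c β B s ω)) *
                  (MM c B s ω * (ENNReal.ofReal (1/β) * k)) := by ring
              _ = _ := by rw [this, one_mul]
          · exact hΘ.comp (Measurable.prodMk measurable_const (by fun_prop))
        · rw [Set.indicator_of_notMem (show ω ∉ {ω | ∀ j ∈ J, 0 < XX c β B j ω} from hω)]
          simp only [Set.indicator_of_notMem (fun h => hω ((hpS ω).1 h))]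
          simp
      · refine lintegral_congr fun ω => ?_
        simp only [Φ, pj_eq hsm]
        by_cases hω : ∀ j ∈ J, 0 < XX c β B j ω
        · simp only [Set.indicator_of_mem ((hpS ω).2 hω)]
          by_cases hu : 0 < XX c β B u ω
          · rw [Set.indicator_of_mem (show XX c β B u ω ∈ Set.Ioi 0 from hu), Set.indicator_of_mem,
              pj_insert]
            · ring
            · exact Finset.forall_mem_insert .. |>.2 ⟨hu, hω⟩
          · rw [Set.indicator_of_notMem (show XX c β B u ω ∉ Set.Ioi 0 from hu),
              Set.indicator_of_notMem]
            · simp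
            · exact fun h => hu (h u (Finset.mem_insert_self _ _))
        · simp only [Set.indicator_of_notMem (fun h => hω ((hpS ω).1 h))]
          rw [zero_mul, zero_mul, Set.indicator_of_notMem]
          exact fun h => hω fun j hj => h j (Finset.mem_insert_of_mem hj)

end ind



section mass
variable {Ω : Type*} [m0 : MeasurableSpace Ω] {P : Measure Ω} [IsProbabilityMeasure P]
    {B : ℝ≥0 → Ω → ℝ}

lemma lint_MM
    (hBmeas : ∀ t, Measurable (B t))
    (hB0 : ∀ᵐ ω ∂P, B 0 ω = 0)
    (hBgauss : ∀ s t : ℝ≥0, s ≤ t →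
      Measure.map (fun ω => B t ω - B s ω) P = gaussianReal 0 (t - s))
    (hBindep : ∀ s t : ℝ≥0, s ≤ t →
      Indep (MeasurableSpace.comap (fun ω => B t ω - B s ω) inferInstance)
        (⨆ u ∈ Set.Iic s, MeasurableSpace.comap (B u) inferInstance) P)
    (c : ℝ) (s : ℝ≥0) : ∫⁻ ω, MM c B s ω ∂P = 1 := by
  have h0 : ∫⁻ ω, MM c B 0 ω ∂P = 1 := by
    rw [← measure_univ (μ := P), ← lintegral_one]
    refine lintegral_congr_ae ?_
    filter_upwards [hB0] with ω h
    simp [MM, h]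
  rcases eq_or_ne s 0 with rfl | hs
  · exact h0
  have := stepB hBmeas hBgauss hBindep c 0 (pos_iff_ne_zero.2 hs) (Φ := fun _ => 1) (by fun_prop)
  simp only [one_mul, lintegral_one, measure_univ, mul_one] at this
  rw [this, h0]

lemma mass_step
    (hBmeas : ∀ t, Measurable (B t))
    (hB0 : ∀ᵐ ω ∂P, B 0 ω = 0)
    (hBgauss : ∀ s t : ℝ≥0, s ≤ t →
      Measure.map (fun ω => B t ω - B s ω) P = gaussianReal 0 (t - s))
    (hBindep : ∀ s t : ℝ≥0, s ≤ t →
      Indep (MeasurableSpace.comap (fun ω => B t ω - B s ω) inferInstance)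
        (⨆ u ∈ Set.Iic s, MeasurableSpace.comap (B u) inferInstance) P)
    (c β : ℝ) (hβ : 0 < β) {ε : ℝ} (hε : 0 < ε) {δ : ℝ≥0} (hδ : 0 < δ) (k : ℕ) :
    ∫⁻ ω, Set.indicator {ω | ∀ j ≤ k, 0 ≤ XX c β B (j * δ) ω}
      (fun ω => ENNReal.ofReal (XX c β B (k * δ) ω + ε) * MM c B (k * δ) ω) ω ∂P ≤
    ENNReal.ofReal (β + ε) +
      k * ENNReal.ofReal ((δ:ℝ)^2 * (∫ z, z^4 ∂(gaussianReal 0 1)) / ε^3) := by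
  induction k with
  | zero =>
    calc _ ≤ ∫⁻ ω, ENNReal.ofReal (β + ε) ∂P := by
          refine lintegral_mono_ae ?_
          filter_upwards [hB0] with ω h
          refine (Set.indicator_le_self _ _ _).trans ?_
          simp [XX, MM, h]
      _ ≤ _ := by simp
  | succ k ih =>
    set C := ENNReal.ofReal ((δ:ℝ)^2 * (∫ z, z^4 ∂(gaussianReal 0 1)) / ε^3) with hC
    have hlt : (k:ℝ≥0) * δ < ((k+1 : ℕ):ℝ≥0) * δ := by
      gcongr
      simp
    have hdiff : ((k+1 : ℕ):ℝ≥0) * δ - (k:ℝ≥0) * δ = δ := by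
      rw [← tsub_mul]; simp
    let S : Set (ℝ≥0 → ℝ) := {p | ∀ j ≤ k, 0 ≤ p (j * δ)}
    have hS : MeasurableSet S := by
      have : S = ⋂ j : ℕ, ⋂ _ : j ≤ k, {p | 0 ≤ p (j * δ)} := by ext; simp [S]
      rw [this]
      exact MeasurableSet.iInter fun j => MeasurableSet.iInter fun _ =>
        measurableSet_le (by fun_prop) (by fun_prop)
    let Φ : (ℝ≥0 → ℝ) × ℝ → ENNReal := fun q =>
      Set.indicator S (fun _ => 1) q.1 * Set.indicator (Set.Ici 0) (fun y => ENNReal.ofReal (y + ε)) q.2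
    have hI : Measurable (Set.indicator (Set.Ici (0:ℝ)) (fun y => ENNReal.ofReal (y + ε))) :=
      Measurable.indicator (by fun_prop) measurableSet_Ici
    have hΦ : Measurable Φ :=
      Measurable.mul ((measurable_const.indicator hS).comp measurable_fst) (hI.comp measurable_snd)
    have key := stepB hBmeas hBgauss hBindep c β hlt hΦ
    have hpS : ∀ ω, pst (XX c β B) (k * δ) ω ∈ S ↔ ∀ j ≤ k, 0 ≤ XX c β B (j * δ) ω := by
      intro ω
      refine forall₂_congr fun j hj => ?_
      have : (j:ℝ≥0) * δ ≤ k * δ := by gcongr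
      simp only [pst, min_eq_left this]
    have e1 : ∀ ω, Set.indicator {ω | ∀ j ≤ k+1, 0 ≤ XX c β B (j * δ) ω}
      (fun ω => ENNReal.ofReal (XX c β B ((k+1:ℕ) * δ) ω + ε) * MM c B ((k+1:ℕ) * δ) ω) ω =
      Φ (pst (XX c β B) (k * δ) ω, XX c β B ((k+1:ℕ) * δ) ω) * MM c B ((k+1:ℕ) * δ) ω := by
      intro ω
      simp only [Φ]
      by_cases hω : ∀ j ≤ k, 0 ≤ XX c β B (j * δ) ω
      · simp only [Set.indicator_of_mem ((hpS ω).2 hω), one_mul]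
        by_cases hu : 0 ≤ XX c β B ((k+1:ℕ) * δ) ω
        · rw [Set.indicator_of_mem (show XX c β B ((k+1:ℕ) * δ) ω ∈ Set.Ici 0 from hu),
            Set.indicator_of_mem]
          intro j hj
          rcases Nat.le_succ_iff.1 hj with h | h
          · exact hω j h
          · rw [h]; exact hu
        · rw [Set.indicator_of_notMem (show XX c β B ((k+1:ℕ) * δ) ω ∉ Set.Ici 0 from hu),
            Set.indicator_of_notMem, zero_mul]
          exact fun h => hu (h (k+1) le_rfl)
      · simp only [Set.indicator_of_notMem (fun h => hω ((hpS ω).1 h))]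
        rw [Set.indicator_of_notMem, zero_mul, zero_mul]
        exact fun h => hω fun j hj => h j (hj.trans (Nat.le_succ k))
    rw [lintegral_congr e1, key, hdiff]
    calc _ ≤ ∫⁻ ω, (Set.indicator {ω | ∀ j ≤ k, 0 ≤ XX c β B (j * δ) ω}
          (fun ω => ENNReal.ofReal (XX c β B (k * δ) ω + ε) * MM c B (k * δ) ω) ω +
          C * MM c B (k * δ) ω) ∂P := by
          refine lintegral_mono fun ω => ?_
          simp only [Φ]
          have hIx : Measurable (fun z => Set.indicator (Set.Ici (0:ℝ))
            (fun y => ENNReal.ofReal (y + ε)) (XX c β B (k * δ) ω + z)) := hI.comp (by fun_prop)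
          rw [lintegral_const_mul _ hIx]
          by_cases hω : ∀ j ≤ k, 0 ≤ XX c β B (j * δ) ω
          · rw [Set.indicator_of_mem ((hpS ω).2 hω),
              Set.indicator_of_mem (show ω ∈ {ω | ∀ j ≤ k, 0 ≤ XX c β B (j * δ) ω} from hω), one_mul,
              ← add_mul, mul_comm]
            gcongr
            exact overshoot δ hε (hω k le_rfl)
          · rw [Set.indicator_of_notMem (fun h => hω ((hpS ω).1 h))]
            simp
      _ = _ + C := by
          rw [lintegral_add_right _ ((measurable_MM c hBmeas _).const_mul C),
            lintegral_const_mul _ (measurable_MM c hBmeas _),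
            lint_MM hBmeas hB0 hBgauss hBindep, mul_one]
      _ ≤ _ := by
          refine (add_le_add_left ih C).trans (le_of_eq ?_)
          push_cast
          ring

lemma mass_grid
    (hBmeas : ∀ t, Measurable (B t))
    (hB0 : ∀ᵐ ω ∂P, B 0 ω = 0)
    (hBgauss : ∀ s t : ℝ≥0, s ≤ t →
      Measure.map (fun ω => B t ω - B s ω) P = gaussianReal 0 (t - s))
    (hBindep : ∀ s t : ℝ≥0, s ≤ t →
      Indep (MeasurableSpace.comap (fun ω => B t ω - B s ω) inferInstance)
        (⨆ u ∈ Set.Iic s, MeasurableSpace.comap (B u) inferInstance) P)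
    (c β : ℝ) (hβ : 0 < β) {t : ℝ≥0} (ht : 0 < t) {ε : ℝ} (hε : 0 < ε) (N : ℕ) (hN : 0 < N)
    (E : Set Ω) (hE : ∀ᵐ ω ∂P, ω ∈ E → ∀ j ≤ N, 0 ≤ XX c β B (j * (t / N)) ω) :
    ∫⁻ ω, Set.indicator E (fun ω => ENNReal.ofReal (XX c β B t ω) * MM c B t ω) ω ∂P ≤
    ENNReal.ofReal (β + ε + (t:ℝ)^2 * (∫ z, z^4 ∂(gaussianReal 0 1)) / ε^3 / N) := by
  have hN' : (0:ℝ≥0) < N := by exact_mod_cast hN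
  have hN'' : (0:ℝ) < N := by exact_mod_cast hN
  have hI : 0 ≤ ∫ z, z^4 ∂(gaussianReal 0 1) := integral_nonneg fun z => by positivity
  have hNt : (N:ℝ≥0) * (t / N) = t := by field_simp
  have key := mass_step hBmeas hB0 hBgauss hBindep c β hβ hε (δ := t / N) (by positivity) N
  rw [hNt] at key
  have e : ENNReal.ofReal (β + ε) +
      N * ENNReal.ofReal (((t / N : ℝ≥0):ℝ)^2 * (∫ z, z^4 ∂(gaussianReal 0 1)) / ε^3) =
      ENNReal.ofReal (β + ε + (t:ℝ)^2 * (∫ z, z^4 ∂(gaussianReal 0 1)) / ε^3 / N) := by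
    rw [← ENNReal.ofReal_natCast, ← ENNReal.ofReal_mul hN''.le, ← ENNReal.ofReal_add (by positivity)
      (by positivity)]
    congr 2
    push_cast
    field_simp
  rw [← e]
  refine le_trans (lintegral_mono_ae ?_) key
  filter_upwards [hE] with ω h
  by_cases hω : ω ∈ E
  · rw [Set.indicator_of_mem hω, Set.indicator_of_mem (show ω ∈ {ω | ∀ j ≤ N, 0 ≤ XX c β B (j * (t / N)) ω} from h hω)]
    gcongr
    linarith
  · rw [Set.indicator_of_notMem hω]; exact zero_le

lemma mass_le
    (hBmeas : ∀ t, Measurable (B t))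
    (hB0 : ∀ᵐ ω ∂P, B 0 ω = 0)
    (hBgauss : ∀ s t : ℝ≥0, s ≤ t →
      Measure.map (fun ω => B t ω - B s ω) P = gaussianReal 0 (t - s))
    (hBindep : ∀ s t : ℝ≥0, s ≤ t →
      Indep (MeasurableSpace.comap (fun ω => B t ω - B s ω) inferInstance)
        (⨆ u ∈ Set.Iic s, MeasurableSpace.comap (B u) inferInstance) P)
    (c β : ℝ) (hβ : 0 < β) {t : ℝ≥0} (ht : 0 < t)
    (E : Set Ω) (hE : ∀ᵐ ω ∂P, ω ∈ E → ∀ u ≤ t, 0 ≤ XX c β B u ω) :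
    ∫⁻ ω, Set.indicator E (fun ω => ENNReal.ofReal (XX c β B t ω) * MM c B t ω) ω ∂P ≤
    ENNReal.ofReal β := by
  have h1 : ∀ ε : ℝ, 0 < ε → ∫⁻ ω, Set.indicator E
      (fun ω => ENNReal.ofReal (XX c β B t ω) * MM c B t ω) ω ∂P ≤ ENNReal.ofReal (β + ε) := by
    intro ε hε
    have ht1 : Tendsto (fun N : ℕ => ENNReal.ofReal
        (β + ε + (t:ℝ)^2 * (∫ z, z^4 ∂(gaussianReal 0 1)) / ε^3 / N)) atTop
        (nhds (ENNReal.ofReal (β + ε + 0))) :=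
      ENNReal.tendsto_ofReal (tendsto_const_nhds.add (tendsto_const_div_atTop_nhds_zero_nat _))
    rw [add_zero] at ht1
    refine ge_of_tendsto ht1 ?_
    filter_upwards [eventually_gt_atTop 0] with N hN
    refine mass_grid hBmeas hB0 hBgauss hBindep c β hβ ht hε N hN E ?_
    filter_upwards [hE] with ω h hω j hj
    refine h hω _ ?_
    have hN' : (0:ℝ≥0) < N := by exact_mod_cast hN
    have hj' : (j:ℝ≥0) ≤ N := by exact_mod_cast hj
    calc (j:ℝ≥0) * (t / N) ≤ N * (t / N) := by gcongr
      _ = t := by field_simp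
  have ht2 : Tendsto (fun n : ℕ => ENNReal.ofReal (β + 1 / ((n:ℝ) + 1))) atTop
      (nhds (ENNReal.ofReal (β + 0))) :=
    ENNReal.tendsto_ofReal (tendsto_const_nhds.add tendsto_one_div_add_atTop_nhds_zero_nat)
  rw [add_zero] at ht2
  exact ge_of_tendsto' ht2 fun n => h1 _ (by positivity)

lemma mass_fin
    (hBmeas : ∀ t, Measurable (B t))
    (hB0 : ∀ᵐ ω ∂P, B 0 ω = 0)
    (hBgauss : ∀ s t : ℝ≥0, s ≤ t →
      Measure.map (fun ω => B t ω - B s ω) P = gaussianReal 0 (t - s))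
    (hBindep : ∀ s t : ℝ≥0, s ≤ t →
      Indep (MeasurableSpace.comap (fun ω => B t ω - B s ω) inferInstance)
        (⨆ u ∈ Set.Iic s, MeasurableSpace.comap (B u) inferInstance) P)
    (c β : ℝ) (hβ : 0 < β) {t : ℝ≥0} (ht : 0 < t) :
    ∫⁻ ω, ENNReal.ofReal (XX c β B t ω) * MM c B t ω ∂P ≠ ⊤ := by
  have key := mass_grid hBmeas hB0 hBgauss hBindep c β hβ ht one_pos 1 one_pos
    {ω | 0 ≤ XX c β B t ω} (by
      filter_upwards [hB0] with ω h0 hω j hj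
      interval_cases j
      · simp [XX, h0, hβ.le]
      · simpa using hω)
  refine ne_top_of_le_ne_top ENNReal.ofReal_ne_top (le_trans (lintegral_mono fun ω => ?_) key)
  by_cases hω : 0 ≤ XX c β B t ω
  · rw [Set.indicator_of_mem (show ω ∈ {ω | 0 ≤ XX c β B t ω} from hω)]
  · rw [ENNReal.ofReal_of_nonpos (not_le.1 hω).le]; simp

end mass



theorem conditioned_drifted_bm_is_bessel3
    {Ω : Type*} [m0 : MeasurableSpace Ω] (P : Measure Ω) [IsProbabilityMeasure P]
    (B : ℝ≥0 → Ω → ℝ)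
    (hBmeas : ∀ t, Measurable (B t))
    (hB0 : ∀ᵐ ω ∂P, B 0 ω = 0)
    (hBcont : ∀ᵐ ω ∂P, Continuous fun t : ℝ≥0 => B t ω)
    (hBgauss : ∀ s t : ℝ≥0, s ≤ t →
      Measure.map (fun ω => B t ω - B s ω) P = gaussianReal 0 (t - s))
    (hBindep : ∀ s t : ℝ≥0, s ≤ t →
      Indep (MeasurableSpace.comap (fun ω => B t ω - B s ω) inferInstance)
        (⨆ u ∈ Set.Iic s, MeasurableSpace.comap (B u) inferInstance) P)
    (W : Fin 3 → ℝ≥0 → Ω → ℝ)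
    (hWmeas : ∀ i t, Measurable (W i t))
    (hW0 : ∀ i, ∀ᵐ ω ∂P, W i 0 ω = 0)
    (hWcont : ∀ i, ∀ᵐ ω ∂P, Continuous fun t : ℝ≥0 => W i t ω)
    (hWgauss : ∀ i, ∀ s t : ℝ≥0, s ≤ t →
      Measure.map (fun ω => W i t ω - W i s ω) P = gaussianReal 0 (t - s))
    (hWindepincr : ∀ i, ∀ s t : ℝ≥0, s ≤ t →
      Indep (MeasurableSpace.comap (fun ω => W i t ω - W i s ω) inferInstance)
        (⨆ u ∈ Set.Iic s, MeasurableSpace.comap (W i u) inferInstance) P)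
    (hWindep : iIndep (fun i : Fin 3 =>
        ⨆ t : ℝ≥0, MeasurableSpace.comap (W i t) inferInstance) P)
    (c β : ℝ) (hc : 0 < c) (hβ : 0 < β) (t : ℝ≥0) (ht : 0 < t) :
    Measure.map
      (fun ω => fun s : Set.Icc (0:ℝ≥0) t => β + c * ((s:ℝ≥0):ℝ) - B (s:ℝ≥0) ω)
      (P.withDensity (fun ω => ENNReal.ofReal (
        (1/β) * (β + c * (t:ℝ) - B t ω) *
        Set.indicator {ω' : Ω | ∀ u ∈ Set.Ioc (0:ℝ≥0) t, B u ω' - c * (u:ℝ) ≤ β}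
          (fun _ => (1:ℝ)) ω *
        Real.exp (c * B t ω - c^2 * (t:ℝ) / 2))))
    =
    Measure.map
      (fun ω => fun s : Set.Icc (0:ℝ≥0) t =>
        Real.sqrt ((β + W 0 (s:ℝ≥0) ω)^2 + (W 1 (s:ℝ≥0) ω)^2 + (W 2 (s:ℝ≥0) ω)^2))
      P := by
  classical
  haveI : Nonempty (Set.Icc (0:ℝ≥0) t) := ⟨⟨0, by simp⟩⟩
  let d : ℕ → Set.Icc (0:ℝ≥0) t := TopologicalSpace.denseSeq _
  have hd : DenseRange d := TopologicalSpace.denseRange_denseSeq _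
  let X := XX c β B
  let R := RR β W
  have hX : ∀ u, Measurable (X u) := measurable_XX c β hBmeas
  have hR : ∀ u, Measurable (R u) := measurable_RR β hWmeas
  let ρ : Ω → ENNReal := fun ω => ENNReal.ofReal (X t ω) * MM c B t ω * ENNReal.ofReal (1/β)
  have hρ0 : Measurable (fun ω => ENNReal.ofReal (XX c β B t ω) * MM c B t ω) :=
    (hX t).ennreal_ofReal.mul (measurable_MM c hBmeas t)
  let E : Set Ω := {ω | ∀ n, 0 ≤ X (d n) ω}
  have hE : MeasurableSet E := by
    have : E = ⋂ n, {ω | 0 ≤ X (d n) ω} := by ext; simp [E]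
    rw [this]
    exact MeasurableSet.iInter fun n => measurableSet_le measurable_const (hX _)
  have hEc : ∀ᵐ ω ∂P, ω ∈ E → ∀ u ≤ t, 0 ≤ X u ω := by
    filter_upwards [hBcont] with ω hω hωE u hu
    have hcl : IsClosed {v : Set.Icc (0:ℝ≥0) t | 0 ≤ X v ω} := by
      refine isClosed_le continuous_const ?_
      have h1 : Continuous fun v : Set.Icc (0:ℝ≥0) t => B v ω := hω.comp continuous_subtype_val
      show Continuous fun v : Set.Icc (0:ℝ≥0) t => β + c * ((v:ℝ≥0):ℝ) - B v ω
      fun_prop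
    have := hd.induction_on (p := fun v => 0 ≤ X v ω) ⟨u, by simpa using hu⟩ hcl hωE
    exact this
  have hdens : (fun ω => ENNReal.ofReal (
        (1/β) * (β + c * (t:ℝ) - B t ω) *
        Set.indicator {ω' : Ω | ∀ u ∈ Set.Ioc (0:ℝ≥0) t, B u ω' - c * (u:ℝ) ≤ β}
          (fun _ => (1:ℝ)) ω *
        Real.exp (c * B t ω - c^2 * (t:ℝ) / 2))) =ᵐ[P] E.indicator ρ := by
    filter_upwards [hEc, hB0] with ω h1 h0
    by_cases hω : ω ∈ E
    · rw [Set.indicator_of_mem hω, Set.indicator_of_mem, mul_one,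
        ENNReal.ofReal_mul' (by positivity), ENNReal.ofReal_mul (by positivity)]
      · simp only [ρ, X, XX, MM]
        ring
      · intro u hu
        have := h1 hω u hu.2
        simp only [X, XX] at this
        linarith
    · rw [Set.indicator_of_notMem hω, Set.indicator_of_notMem]
      · simp
      · intro h
        refine hω fun n => ?_
        rcases eq_or_ne ((d n : Set.Icc (0:ℝ≥0) t) : ℝ≥0) 0 with hz | hz
        · simp [X, XX, hz, h0, hβ.le]
        · have := h (d n) ⟨pos_iff_ne_zero.2 hz, (d n).2.2⟩
          simp only [X, XX]
          linarith
  rw [withDensity_congr_ae hdens]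
  set μ := P.withDensity (E.indicator ρ) with hμ
  let m := P.withDensity ρ
  have hm : ∀ A, MeasurableSet A → m A = ∫⁻ ω, A.indicator ρ ω ∂P := fun A hA => by
    rw [withDensity_apply _ hA, lintegral_indicator hA]
  have hμm : ∀ A, MeasurableSet A → μ A = m (A ∩ E) := fun A hA => by
    rw [hm _ (hA.inter hE), hμ, withDensity_apply _ hA, ← lintegral_indicator hA,
      Set.indicator_indicator]
  have hmfin : IsFiniteMeasure m := by
    refine isFiniteMeasure_withDensity ?_
    simp only [ρ]
    rw [lintegral_mul_const _ hρ0]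
    exact ENNReal.mul_ne_top (mass_fin hBmeas hB0 hBgauss hBindep c β hβ ht) ENNReal.ofReal_ne_top
  have hμ1 : μ Set.univ ≤ 1 := by
    rw [hμm _ MeasurableSet.univ, Set.univ_inter, hm _ hE]
    have h1 := mass_le hBmeas hB0 hBgauss hBindep c β hβ ht E hEc
    have h2 : ∀ ω, E.indicator ρ ω = E.indicator
        (fun ω => ENNReal.ofReal (XX c β B t ω) * MM c B t ω) ω * ENNReal.ofReal (1/β) := by
      intro ω
      by_cases hω : ω ∈ E
      · rw [Set.indicator_of_mem hω, Set.indicator_of_mem hω]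
      · rw [Set.indicator_of_notMem hω, Set.indicator_of_notMem hω, zero_mul]
    rw [lintegral_congr h2, lintegral_mul_const _ (hρ0.indicator hE)]
    calc _ ≤ ENNReal.ofReal β * ENNReal.ofReal (1/β) := by gcongr
      _ = 1 := by rw [← ENNReal.ofReal_mul hβ.le]; simp [hβ.ne']
  haveI : IsFiniteMeasure μ := ⟨hμ1.trans_lt ENNReal.one_lt_top⟩
  have hXp : Measurable (fun ω => fun s : Set.Icc (0:ℝ≥0) t => X s ω) :=
    measurable_pi_lambda _ fun s => hX s
  have hRp : Measurable (fun ω => fun s : Set.Icc (0:ℝ≥0) t => R s ω) :=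
    measurable_pi_lambda _ fun s => hR s
  show Measure.map (fun ω => fun s : Set.Icc (0:ℝ≥0) t => X s ω) μ =
    Measure.map (fun ω => fun s : Set.Icc (0:ℝ≥0) t => R s ω) P
  have hfd : ∀ I : Finset (Set.Icc (0:ℝ≥0) t),
      (Measure.map (fun ω => fun s : Set.Icc (0:ℝ≥0) t => R s ω) P).map I.restrict =
      (Measure.map (fun ω => fun s : Set.Icc (0:ℝ≥0) t => X s ω) μ).map I.restrict := by
    intro I
    have hr : Measurable (I.restrict (π := fun _ : Set.Icc (0:ℝ≥0) t => ℝ)) :=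
      Finset.measurable_restrict I
    rw [Measure.map_map hr hRp, Measure.map_map hr hXp]
    have hle : P.map (I.restrict ∘ fun ω => fun s : Set.Icc (0:ℝ≥0) t => R s ω) ≤
        μ.map (I.restrict ∘ fun ω => fun s : Set.Icc (0:ℝ≥0) t => X s ω) := by
      refine Measure.le_iff.2 fun S hS => ?_
      rw [Measure.map_apply (hr.comp hRp) hS, Measure.map_apply (hr.comp hXp) hS,
        hμm _ (hr.comp hXp hS)]
      set A := (I.restrict ∘ fun ω => fun s : Set.Icc (0:ℝ≥0) t => X s ω) ⁻¹' S with hA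
      have hAm : MeasurableSet A := hr.comp hXp hS
      let J : ℕ → Finset ℝ≥0 := fun n =>
        insert 0 (insert t (I.image (fun i : Set.Icc (0:ℝ≥0) t => (i : ℝ≥0)) ∪
          (Finset.range n).image (fun k => (d k : ℝ≥0))))
      let En : ℕ → Set Ω := fun n => {ω | ∀ j ∈ J n, 0 ≤ X j ω}
      have hEn : ∀ n, MeasurableSet (En n) := fun n => by
        have : En n = ⋂ j ∈ J n, {ω | 0 ≤ X j ω} := by ext; simp [En]
        rw [this]
        exact Finset.measurableSet_biInter _ fun j _ => measurableSet_le measurable_const (hX j)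
      have hanti : Antitone fun n => A ∩ En n := by
        intro a b hab
        refine Set.inter_subset_inter_right _ fun ω hω j hj => hω j ?_
        have : J a ⊆ J b := by
          simp only [J]
          gcongr
        exact this hj
      have hlim := tendsto_measure_iInter_atTop (μ := m) (s := fun n => A ∩ En n)
        (fun n => (hAm.inter (hEn n)).nullMeasurableSet) hanti ⟨0, measure_ne_top _ _⟩
      have hsub : (⋂ n, A ∩ En n) ⊆ A ∩ E := by
        intro ω hω
        rw [Set.mem_iInter] at hω
        refine ⟨(hω 0).1, fun n => (hω (n+1)).2 _ ?_⟩
        simp only [J, Finset.mem_insert, Finset.mem_union, Finset.mem_image, Finset.mem_range]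
        exact Or.inr (Or.inr (Or.inr ⟨n, by omega, rfl⟩))
      refine le_trans (ge_of_tendsto' hlim fun n => ?_) (measure_mono hsub)
      let G : (ℝ≥0 → ℝ) → ENNReal := fun p => S.indicator (fun _ => 1) (fun i : I => p (i : Set.Icc (0:ℝ≥0) t))
      have hG : Measurable G :=
        (measurable_const.indicator hS).comp (measurable_pi_lambda _ fun i => measurable_pi_apply _)
      have htJ : t ∈ J n := by simp [J]
      have hJle : ∀ j ∈ J n, j ≤ t := by
        intro j hj
        simp only [J, Finset.mem_insert, Finset.mem_union, Finset.mem_image, Finset.mem_range] at hj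
        rcases hj with rfl | rfl | ⟨i, -, rfl⟩ | ⟨k, -, rfl⟩
        · exact ht.le
        · exact le_rfl
        · exact i.2.2
        · exact (d k).2.2
      have hIJ : ∀ i ∈ I, (i : ℝ≥0) ∈ J n := by
        intro i hi
        simp only [J, Finset.mem_insert, Finset.mem_union, Finset.mem_image, Finset.mem_range]
        exact Or.inr (Or.inr (Or.inl ⟨i, hi, rfl⟩))
      have hGp : ∀ (V : ℝ≥0 → Ω → ℝ) ω, G (pj (J n) V ω) =
          ((I.restrict ∘ fun ω => fun s : Set.Icc (0:ℝ≥0) t => V s ω) ⁻¹' S).indicator (fun _ => 1) ω := by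
        intro V ω
        have : (fun i : I => pj (J n) V ω (i : Set.Icc (0:ℝ≥0) t)) =
            (I.restrict ∘ fun ω => fun s : Set.Icc (0:ℝ≥0) t => V s ω) ω := by
          funext i
          simp [pj, resJ, hIJ i.1 i.2]
        simp only [G, this]
        rfl
      have key := law_le hBmeas hB0 hBgauss hBindep hWmeas hW0 hWgauss hWindepincr hWindep c β hβ (J n)
        (by simp [J]) t htJ hJle G hG
      simp only [hGp] at key
      rw [lintegral_indicator_const (hr.comp hRp hS), one_mul] at key
      refine key.trans ?_
      show _ ≤ m (A ∩ En n)
      rw [hm _ (hAm.inter (hEn n))]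
      refine lintegral_mono fun ω => ?_
      by_cases h1 : ω ∈ A ∩ En n
      · rw [Set.indicator_of_mem h1]
        refine (Set.indicator_le_self _ _ _).trans ?_
        rw [Set.indicator_of_mem (show ω ∈ _ from h1.1), one_mul]
      · rw [Set.indicator_of_notMem h1]
        by_cases h2 : ω ∈ {ω | ∀ j ∈ J n, 0 < XX c β B j ω}
        · rw [Set.indicator_of_mem h2, Set.indicator_of_notMem, zero_mul]
          exact fun h3 => h1 ⟨h3, fun j hj => (h2 j hj).le⟩
        · rw [Set.indicator_of_notMem h2]
    refine Measure.eq_of_le_of_measure_univ_eq hle (le_antisymm (hle _) ?_)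
    rw [Measure.map_apply (hr.comp hRp) MeasurableSet.univ,
      Measure.map_apply (hr.comp hXp) MeasurableSet.univ]
    simpa using hμ1
  have hlim1 : IsProjectiveLimit (Measure.map (fun ω => fun s : Set.Icc (0:ℝ≥0) t => X s ω) μ)
      (fun I => (Measure.map (fun ω => fun s : Set.Icc (0:ℝ≥0) t => X s ω) μ).map I.restrict) :=
    fun I => rfl
  exact hlim1.unique hfd
end
end

section
/- (Slepian's comparison lemma.) Let A ⊂ ℝ^d be a compact set and let (X_r)_{r∈A} and (Y_r)_{r∈A} be two almost surely continuous centered Gaussian processes with continuous covariance kernels k_X and k_Y satisfying k_X(u,v) ≤ k_Y(u,v) for all u, v ∈ A and k_X(u,u) = k_Y(u,u) for all u ∈ A. Then for every bounded increasing function F : ℝ → ℝ, E[F(sup_{x∈A} Y_x)] ≤ E[F(sup_{x∈A} X_x)]. -/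
open MeasureTheory ProbabilityTheory Filter

noncomputable section


lemma stein_one (v : NNReal) (h h' : ℝ → ℝ) (hd : ∀ x, HasDerivAt h (h' x) x)
    (hc' : Continuous h') (C : ℝ) (hb : ∀ x, |h x| ≤ C) (hb' : ∀ x, |h' x| ≤ C) :
    ∫ x, x * h x ∂(gaussianReal 0 v) = v * ∫ x, h' x ∂(gaussianReal 0 v) := by
  by_cases hv : v = 0
  · subst hv; simp [gaussianReal_zero_var]
  have hc : Continuous h := continuous_iff_continuousAt.2 fun x => (hd x).continuousAt
  have hv' : (v : ℝ) ≠ 0 := by exact_mod_cast hv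
  have hpd : ∀ x, HasDerivAt (gaussianPDFReal 0 v) (-(x / v) * gaussianPDFReal 0 v x) x := by
    intro x
    have h1 : HasDerivAt (fun x : ℝ => -(x - 0) ^ 2 / (2 * (v:ℝ))) (-(x / v)) x := by
      have := (((hasDerivAt_id x).sub_const 0).pow 2).neg.div_const (2 * (v:ℝ))
      refine this.congr_deriv ?_
      simp; field_simp
    have h2 := (h1.exp).const_mul ((√(2 * Real.pi * v))⁻¹)
    rw [gaussianPDFReal_def]
    refine h2.congr_deriv ?_
    ring
  have hp := integrable_gaussianPDFReal 0 v
  have hxp : Integrable (fun x => x * gaussianPDFReal 0 v x) := by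
    have := (memLp_id_gaussianReal (μ := 0) (v := v) 1).integrable (by simp)
    rw [gaussianReal_of_var_ne_zero _ hv,
      integrable_withDensity_iff_integrable_smul' (measurable_gaussianPDF 0 v)
        (by simp [gaussianPDF_lt_top])] at this
    refine this.congr (ae_of_all _ fun x => ?_)
    simp [toReal_gaussianPDF, mul_comm]
  have i1 : Integrable (fun x => h x * gaussianPDFReal 0 v x) :=
    hp.bdd_mul (c := C) hc.aestronglyMeasurable (ae_of_all _ hb)
  have i2 : Integrable (fun x => h' x * gaussianPDFReal 0 v x) :=
    hp.bdd_mul (c := C) hc'.aestronglyMeasurable (ae_of_all _ hb')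
  have i3 : Integrable (fun x => h x * (x * gaussianPDFReal 0 v x)) :=
    hxp.bdd_mul (c := C) hc.aestronglyMeasurable (ae_of_all _ hb)
  have key := integral_eq_zero_of_hasDerivAt_of_integrable
    (f := fun x => h x * gaussianPDFReal 0 v x)
    (f' := fun x => h' x * gaussianPDFReal 0 v x - (v:ℝ)⁻¹ * (h x * (x * gaussianPDFReal 0 v x)))
    (fun x => ((hd x).mul (hpd x)).congr_deriv (by ring)) (i2.sub (i3.const_mul _)) i1
  rw [integral_sub i2 (i3.const_mul _), integral_const_mul] at key
  rw [integral_gaussianReal_eq_integral_smul hv, integral_gaussianReal_eq_integral_smul hv]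
  have e1 : ∀ x, gaussianPDFReal 0 v x • (x * h x) = h x * (x * gaussianPDFReal 0 v x) := by
    intro x; simp; ring
  have e2 : ∀ x, gaussianPDFReal 0 v x • (h' x) = h' x * gaussianPDFReal 0 v x := by
    intro x; simp; ring
  simp_rw [e1, e2]
  have key2 := congrArg (fun y => (v:ℝ) * y) key
  simp only [mul_sub, mul_inv_cancel_left₀ hv', mul_zero] at key2
  linarith

lemma prod_bound {ι : Type*} (s : Finset ι) (a : ι → ℝ) (C : ℝ) (h : ∀ i, |a i| ≤ C) :
    |∏ i ∈ s, a i| ≤ C ^ s.card := by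
  rw [Finset.abs_prod]
  rw [← Finset.prod_const]
  exact Finset.prod_le_prod (fun i _ => abs_nonneg _) (fun i _ => h i)

lemma stein_multi {Ω : Type*} [MeasurableSpace Ω] (P : Measure Ω) [IsProbabilityMeasure P]
    {ι : Type*} [Fintype ι] [DecidableEq ι] (W : Ω → ℝ) (Z : ι → Ω → ℝ)
    (hG : HasGaussianLaw (fun ω => (W ω, fun i => Z i ω)) P)
    (hW : ∫ ω, W ω ∂P = 0) (hWm : Measurable W) (hZm : ∀ i, Measurable (Z i))
    (u u' : ι → ℝ → ℝ) (hu : ∀ i x, HasDerivAt (u i) (u' i x) x)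
    (huc : ∀ i, Continuous (u' i)) (C : ℝ) (hb : ∀ i x, |u i x| ≤ C) (hb' : ∀ i x, |u' i x| ≤ C) :
    ∫ ω, W ω * ∏ i, u i (Z i ω) ∂P =
      ∑ j, (∫ ω, W ω * Z j ω ∂P) *
        ∫ ω, (∏ k ∈ Finset.univ.erase j, u k (Z k ω)) * u' j (Z j ω) ∂P := by
  have huc0 : ∀ i, Continuous (u i) := fun i =>
    continuous_iff_continuousAt.2 fun x => (hu i x).continuousAt
  have hWG : HasGaussianLaw W P := hG.fst
  have hZG : HasGaussianLaw (fun ω i => Z i ω) P := hG.snd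
  have hW2 : MemLp W 2 P := hWG.memLp_two
  have hZ2 : ∀ i, MemLp (Z i) 2 P := fun i => (hZG.eval i).memLp_two
  set v : NNReal := Var[W; P].toNNReal with hvdef
  have hlaw : P.map W = gaussianReal 0 v := by rw [hWG.map_eq_gaussianReal, hW]
  have hvv : (v : ℝ) = ∫ ω, W ω * W ω ∂P := by
    rw [hvdef, Real.coe_toNNReal _ (variance_nonneg _ _), variance_of_integral_eq_zero hWm.aemeasurable hW]
    simp [pow_two]
  obtain ⟨a, ha⟩ : ∃ a : ι → ℝ, ∀ j, a j * v = ∫ ω, W ω * Z j ω ∂P := by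
    by_cases hv : v = 0
    · refine ⟨0, fun j => ?_⟩
      have : W =ᵐ[P] 0 := by
        have h0 : ∫ ω, W ω * W ω ∂P = 0 := by rw [← hvv, hv]; simp
        rw [integral_eq_zero_iff_of_nonneg (fun ω => mul_self_nonneg _) (hW2.integrable_mul hW2)] at h0
        filter_upwards [h0] with ω h
        simpa using h
      rw [integral_eq_zero_of_ae]
      · simp
      · filter_upwards [this] with ω h
        simp [h]
    · exact ⟨fun j => (∫ ω, W ω * Z j ω ∂P) / v, fun j =>
        div_mul_cancel₀ _ (by exact_mod_cast hv)⟩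
  let V : ι → Ω → ℝ := fun j ω => Z j ω - a j * W ω
  have hVm : ∀ j, Measurable (V j) := fun j => (hZm j).sub (hWm.const_mul _)
  have hVm' : Measurable (fun ω j => V j ω) := measurable_pi_lambda _ hVm
  have hind : IndepFun W (fun ω j => V j ω) P := by
    have h1 : HasGaussianLaw (fun ω => ((fun _ : Unit => W ω), fun j => V j ω)) P := by
      let L : ℝ × (ι → ℝ) →L[ℝ] (Unit → ℝ) × (ι → ℝ) :=
        ContinuousLinearMap.prod
          (ContinuousLinearMap.pi fun _ => ContinuousLinearMap.fst ℝ ℝ (ι → ℝ))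
          (ContinuousLinearMap.pi fun j =>
            (ContinuousLinearMap.proj j).comp (ContinuousLinearMap.snd ℝ ℝ (ι → ℝ)) -
             a j • ContinuousLinearMap.fst ℝ ℝ (ι → ℝ))
      exact hG.map_fun L
    have h2 := HasGaussianLaw.indepFun_of_covariance_eval (X := fun _ : Unit => W) (Y := V) h1
      (by
        intro _ j
        have hV2 : MemLp (V j) 2 P := (hZ2 j).sub (hW2.const_mul _)
        rw [covariance_eq_sub hW2 hV2, hW, zero_mul, sub_zero]
        have : ∀ ω, (W * V j) ω = W ω * Z j ω - a j * (W ω * W ω) := by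
          intro ω; simp [V]; ring
        simp_rw [this]
        have q1 : Integrable (fun ω => W ω * Z j ω) P := hW2.integrable_mul (hZ2 j)
        have q2 : Integrable (fun ω => W ω * W ω) P := hW2.integrable_mul hW2
        rw [integral_sub q1 (q2.const_mul _),
          integral_const_mul, ← hvv, ha, sub_self])
    exact h2.comp (φ := fun f : Unit → ℝ => f ()) (ψ := id) (measurable_pi_apply _) measurable_id
  have hprod : P.map (fun ω => (W ω, fun j => V j ω)) =
      (gaussianReal 0 v).prod (P.map (fun ω j => V j ω)) := by
    rw [← hlaw]
    exact (indepFun_iff_map_prod_eq_prod_map_map hWm.aemeasurable hVm'.aemeasurable).1 hind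
  have : IsProbabilityMeasure (P.map (fun ω j => V j ω)) :=
    Measure.isProbabilityMeasure_map hVm'.aemeasurable
  have hpair : Measurable (fun ω => (W ω, fun j => V j ω)) := hWm.prodMk hVm'
  set ν := P.map (fun ω j => V j ω) with hν
  let H : ℝ × (ι → ℝ) → ℝ := fun p => ∏ i, u i (p.2 i + a i * p.1)
  let D : ι → ℝ × (ι → ℝ) → ℝ := fun j p =>
    (∏ k ∈ Finset.univ.erase j, u k (p.2 k + a k * p.1)) * u' j (p.2 j + a j * p.1)
  have hHc : Continuous H := by
    refine continuous_finsetProd _ fun i _ => (huc0 i).comp ?_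
    fun_prop
  have hDc : ∀ j, Continuous (D j) := by
    intro j
    refine Continuous.mul (continuous_finsetProd _ fun i _ => (huc0 i).comp ?_)
      ((huc j).comp ?_) <;> fun_prop
  have hHb : ∀ p, |H p| ≤ C ^ (Finset.univ : Finset ι).card := fun p =>
    prod_bound _ _ _ (fun i => hb i _)
  have hDb : ∀ j p, |D j p| ≤ C ^ (Finset.univ.erase j).card * C := fun j p => by
    simp only [D]
    rw [abs_mul]
    exact mul_le_mul (prod_bound _ _ _ (fun i => hb i _)) (hb' _ _) (abs_nonneg _)
      (pow_nonneg ((abs_nonneg _).trans (hb j 0)) _)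
  have hDi : ∀ j, Integrable (D j) ((gaussianReal 0 v).prod ν) := fun j =>
    Integrable.of_bound (hDc j).aestronglyMeasurable _ (ae_of_all _ (hDb j))
  have hWi : Integrable (fun x : ℝ => x) (gaussianReal 0 v) :=
    (memLp_id_gaussianReal (μ := 0) (v := v) 1).integrable (by simp)
  have hHi : Integrable (fun p => p.1 * H p) ((gaussianReal 0 v).prod ν) := by
    have h1 : Integrable (fun p : ℝ × (ι → ℝ) => p.1) ((gaussianReal 0 v).prod ν) :=
      hWi.comp_fst ν
    exact h1.mul_bdd (c := C ^ (Finset.univ : Finset ι).card) hHc.aestronglyMeasurable (ae_of_all _ hHb)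
  have eZ : ∀ i ω, Z i ω = V i ω + a i * W ω := fun i ω => by simp [V]
  have lhs : ∫ ω, W ω * ∏ i, u i (Z i ω) ∂P = ∫ p, p.1 * H p ∂((gaussianReal 0 v).prod ν) := by
    rw [← hprod, integral_map hpair.aemeasurable
      (by exact (continuous_fst.mul hHc).aestronglyMeasurable)]
    simp_rw [eZ]; rfl
  have rhs : ∀ j, ∫ ω, (∏ k ∈ Finset.univ.erase j, u k (Z k ω)) * u' j (Z j ω) ∂P
      = ∫ p, D j p ∂((gaussianReal 0 v).prod ν) := by
    intro j
    rw [← hprod, integral_map hpair.aemeasurable (hDc j).aestronglyMeasurable]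
    simp_rw [eZ]; rfl
  rw [lhs]
  simp_rw [rhs]
  rw [integral_prod_symm _ hHi]
  have inner : ∀ z : ι → ℝ, ∫ w, w * H (w, z) ∂(gaussianReal 0 v) =
      v * ∫ w, ∑ j, a j * D j (w, z) ∂(gaussianReal 0 v) := by
    intro z
    refine stein_one v _ _ ?_ ?_ (max (C ^ (Finset.univ : Finset ι).card) (∑ j, |a j| * (C ^ (Finset.univ.erase j).card * C))) ?_ ?_
    · intro w
      have h1 : ∀ j, HasDerivAt (fun w => u j (z j + a j * w)) (u' j (z j + a j * w) * a j) w := by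
        intro j
        refine (hu j _).comp w ?_
        simpa using ((hasDerivAt_id w).const_mul (a j)).const_add (z j)
      refine (HasDerivAt.fun_finsetProd (u := Finset.univ) (fun i _ => h1 i)).congr_deriv ?_
      refine Finset.sum_congr rfl fun j _ => ?_
      simp [D]; ring
    · refine continuous_finsetSum _ fun j _ => continuous_const.mul ((hDc j).comp (by fun_prop))
    · intro x
      exact (hHb _).trans (le_max_left _ _)
    · intro x
      refine le_trans ((Finset.abs_sum_le_sum_abs _ _).trans (Finset.sum_le_sum fun j _ => ?_)) (le_max_right _ _)
      rw [abs_mul]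
      exact mul_le_mul_of_nonneg_left (hDb _ _) (abs_nonneg _)
  simp only [inner]
  rw [integral_const_mul, ← integral_prod_symm (f := fun p => ∑ j, a j * D j p)
    (integrable_finsetSum _ fun j _ => (hDi j).const_mul _),
    integral_finsetSum _ (fun j _ => (hDi j).const_mul _), Finset.mul_sum]
  refine Finset.sum_congr rfl fun j _ => ?_
  rw [integral_const_mul, ← ha]
  ring

lemma slepian_fin {Ω : Type*} [MeasurableSpace Ω] (P : Measure Ω) [IsProbabilityMeasure P]
    {ι : Type*} [Fintype ι] [DecidableEq ι] (X Y : ι → Ω → ℝ)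
    (hXG : HasGaussianLaw (fun ω i => X i ω) P) (hYG : HasGaussianLaw (fun ω i => Y i ω) P)
    (hX0 : ∀ i, ∫ ω, X i ω ∂P = 0) (hY0 : ∀ i, ∫ ω, Y i ω ∂P = 0)
    (hXm : ∀ i, Measurable (X i)) (hYm : ∀ i, Measurable (Y i))
    (hcomp : ∀ i j, ∫ ω, X i ω * X j ω ∂P ≤ ∫ ω, Y i ω * Y j ω ∂P)
    (hdiag : ∀ i, ∫ ω, X i ω * X i ω ∂P = ∫ ω, Y i ω * Y i ω ∂P)
    (g g' g'' : ℝ → ℝ) (hg : ∀ x, HasDerivAt g (g' x) x) (hg' : ∀ x, HasDerivAt g' (g'' x) x)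
    (hg'' : Continuous g'') (C : ℝ) (hb : ∀ x, |g x| ≤ C) (hb' : ∀ x, |g' x| ≤ C)
    (hb'' : ∀ x, |g'' x| ≤ C) (hpos : ∀ x, 0 ≤ g x) (hneg : ∀ x, g' x ≤ 0) :
    ∫ ω, ∏ i, g (X i ω) ∂P ≤ ∫ ω, ∏ i, g (Y i ω) ∂P := by
  have hgc : Continuous g := continuous_iff_continuousAt.2 fun x => (hg x).continuousAt
  have hgc' : Continuous g' := continuous_iff_continuousAt.2 fun x => (hg' x).continuousAt
  have hX2 : ∀ i, MemLp (X i) 2 P := fun i => (hXG.eval i).memLp_two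
  have hY2 : ∀ i, MemLp (Y i) 2 P := fun i => (hYG.eval i).memLp_two
  have hXi : ∀ i, Integrable (X i) P := fun i => (hX2 i).integrable (by norm_num)
  have hYi : ∀ i, Integrable (Y i) P := fun i => (hY2 i).integrable (by norm_num)
  set Q := P.prod P with hQ
  let Z : ℝ → ι → Ω × Ω → ℝ := fun θ i p => Real.cos θ * X i p.1 + Real.sin θ * Y i p.2
  let W : ℝ → ι → Ω × Ω → ℝ := fun θ i p => -Real.sin θ * X i p.1 + Real.cos θ * Y i p.2
  have hXm1 : ∀ i, Measurable (fun p : Ω × Ω => X i p.1) := fun i => (hXm i).comp measurable_fst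
  have hYm2 : ∀ i, Measurable (fun p : Ω × Ω => Y i p.2) := fun i => (hYm i).comp measurable_snd
  have hXi1 : ∀ i, Integrable (fun p : Ω × Ω => X i p.1) Q := fun i => (hXi i).comp_fst P
  have hYi2 : ∀ i, Integrable (fun p : Ω × Ω => Y i p.2) Q := fun i => (hYi i).comp_snd P
  have hZm : ∀ θ i, Measurable (Z θ i) := fun θ i =>
    ((hXm1 i).const_mul _).add ((hYm2 i).const_mul _)
  have hWm : ∀ θ i, Measurable (W θ i) := fun θ i =>
    ((hXm1 i).const_mul _).add ((hYm2 i).const_mul _)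
  have hWi : ∀ θ i, Integrable (W θ i) Q := fun θ i =>
    ((hXi1 i).const_mul _).add ((hYi2 i).const_mul _)
  have hXm' : Measurable (fun ω i => X i ω) := measurable_pi_lambda _ hXm
  have hYm' : Measurable (fun ω i => Y i ω) := measurable_pi_lambda _ hYm
  have hJ : HasGaussianLaw (fun p : Ω × Ω => ((fun i => X i p.1), (fun i => Y i p.2))) Q := by
    have h1 : HasGaussianLaw (fun p : Ω × Ω => (fun i => X i p.1)) Q := by
      constructor
      have : Q.map (fun p : Ω × Ω => (fun i => X i p.1)) = P.map (fun ω i => X i ω) := by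
        rw [← (measurePreserving_fst (μ := P) (ν := P)).map_eq,
          Measure.map_map hXm' measurable_fst]
        rfl
      rw [this]
      exact hXG.isGaussian_map
    have h2 : HasGaussianLaw (fun p : Ω × Ω => (fun i => Y i p.2)) Q := by
      constructor
      have : Q.map (fun p : Ω × Ω => (fun i => Y i p.2)) = P.map (fun ω i => Y i ω) := by
        rw [← (measurePreserving_snd (μ := P) (ν := P)).map_eq,
          Measure.map_map hYm' measurable_snd]
        rfl
      rw [this]
      exact hYG.isGaussian_map
    refine IndepFun.hasGaussianLaw h1 h2 ?_
    exact indepFun_prod (μ := P) (ν := P) hXm' hYm'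
  have hWZ : ∀ θ i, HasGaussianLaw (fun p => (W θ i p, fun j => Z θ j p)) Q := by
    intro θ i
    let L : (ι → ℝ) × (ι → ℝ) →L[ℝ] ℝ × (ι → ℝ) :=
      ContinuousLinearMap.prod
        ((-Real.sin θ) • (ContinuousLinearMap.proj i).comp (ContinuousLinearMap.fst ℝ (ι → ℝ) (ι → ℝ))
          + (Real.cos θ) • (ContinuousLinearMap.proj i).comp (ContinuousLinearMap.snd ℝ (ι → ℝ) (ι → ℝ)))
        (ContinuousLinearMap.pi fun j =>
          (Real.cos θ) • (ContinuousLinearMap.proj j).comp (ContinuousLinearMap.fst ℝ (ι → ℝ) (ι → ℝ))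
          + (Real.sin θ) • (ContinuousLinearMap.proj j).comp (ContinuousLinearMap.snd ℝ (ι → ℝ) (ι → ℝ)))
    exact hJ.map_fun L
  have hW0 : ∀ θ i, ∫ p, W θ i p ∂Q = 0 := by
    intro θ i
    have e1 : ∫ p : Ω × Ω, X i p.1 ∂Q = 0 := by rw [hQ, integral_fun_fst]; simp [hX0]
    have e2 : ∫ p : Ω × Ω, Y i p.2 ∂Q = 0 := by rw [hQ, integral_fun_snd]; simp [hY0]
    simp only [W]
    rw [integral_add ((hXi1 i).const_mul _) ((hYi2 i).const_mul _), integral_const_mul,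
      integral_const_mul, e1, e2]
    simp
  have hcov : ∀ θ i j, ∫ p, W θ i p * Z θ j p ∂Q =
      Real.sin θ * Real.cos θ * (∫ ω, Y i ω * Y j ω ∂P - ∫ ω, X i ω * X j ω ∂P) := by
    intro θ i j
    have hXX : Integrable (fun p : Ω × Ω => X i p.1 * X j p.1) Q :=
      ((hX2 i).integrable_mul (hX2 j)).comp_fst P
    have hYY : Integrable (fun p : Ω × Ω => Y i p.2 * Y j p.2) Q :=
      ((hY2 i).integrable_mul (hY2 j)).comp_snd P
    have hXY : Integrable (fun p : Ω × Ω => X i p.1 * Y j p.2) Q := (hXi i).mul_prod (hYi j)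
    have hXY' : Integrable (fun p : Ω × Ω => X j p.1 * Y i p.2) Q := (hXi j).mul_prod (hYi i)
    have e1 : ∫ p : Ω × Ω, X i p.1 * X j p.1 ∂Q = ∫ ω, X i ω * X j ω ∂P := by
      rw [hQ, integral_fun_fst (fun ω => X i ω * X j ω)]; simp
    have e2 : ∫ p : Ω × Ω, Y i p.2 * Y j p.2 ∂Q = ∫ ω, Y i ω * Y j ω ∂P := by
      rw [hQ, integral_fun_snd (fun ω => Y i ω * Y j ω)]; simp
    have e3 : ∫ p : Ω × Ω, X i p.1 * Y j p.2 ∂Q = 0 := by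
      rw [hQ, integral_prod_mul, hX0]; simp
    have e4 : ∫ p : Ω × Ω, X j p.1 * Y i p.2 ∂Q = 0 := by
      rw [hQ, integral_prod_mul, hX0]; simp
    have : ∀ p, W θ i p * Z θ j p = Real.sin θ * Real.cos θ * (Y i p.2 * Y j p.2)
        - Real.sin θ * Real.cos θ * (X i p.1 * X j p.1)
        - (Real.sin θ) ^ 2 * (X i p.1 * Y j p.2) + (Real.cos θ) ^ 2 * (X j p.1 * Y i p.2) := by
      intro p; simp only [W, Z]; ring
    simp_rw [this]
    have q1 : Integrable (fun p : Ω × Ω => Real.sin θ * Real.cos θ * (Y i p.2 * Y j p.2)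
        - Real.sin θ * Real.cos θ * (X i p.1 * X j p.1)) Q :=
      (hYY.const_mul _).sub (hXX.const_mul _)
    have q2 : Integrable (fun p : Ω × Ω => Real.sin θ * Real.cos θ * (Y i p.2 * Y j p.2)
        - Real.sin θ * Real.cos θ * (X i p.1 * X j p.1)
        - (Real.sin θ) ^ 2 * (X i p.1 * Y j p.2)) Q := q1.sub (hXY.const_mul _)
    rw [integral_add q2 (hXY'.const_mul _), integral_sub q1 (hXY.const_mul _),
      integral_sub (hYY.const_mul _) (hXX.const_mul _)]
    simp only [integral_const_mul, e1, e2, e3, e4]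
    ring
  let D : ℝ → ι → Ω × Ω → ℝ := fun θ i p =>
    (∏ k ∈ Finset.univ.erase i, g (Z θ k p)) * (g' (Z θ i p) * W θ i p)
  have hC0 : 0 ≤ C := (abs_nonneg _).trans (hb 0)
  have hDb : ∀ θ i p, |D θ i p| ≤ C ^ (Finset.univ.erase i).card * (C * (|X i p.1| + |Y i p.2|)) := by
    intro θ i p
    simp only [D]
    rw [abs_mul, abs_mul]
    have hw : |W θ i p| ≤ |X i p.1| + |Y i p.2| := by
      refine (abs_add_le _ _).trans (add_le_add ?_ ?_)
      · rw [abs_mul, abs_neg]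
        exact mul_le_of_le_one_left (abs_nonneg _) (Real.abs_sin_le_one _)
      · rw [abs_mul]
        exact mul_le_of_le_one_left (abs_nonneg _) (Real.abs_cos_le_one _)
    have hp := prod_bound (Finset.univ.erase i) (fun k => g (Z θ k p)) C (fun k => hb _)
    have := hb' (Z θ i p)
    gcongr
  have hDm : ∀ θ i, Measurable (D θ i) := fun θ i =>
    (Finset.measurable_fun_prod _ fun k _ => hgc.measurable.comp (hZm θ k)).mul
      ((hgc'.measurable.comp (hZm θ i)).mul (hWm θ i))
  have hBi : ∀ i, Integrable (fun p : Ω × Ω =>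
      C ^ (Finset.univ.erase i).card * (C * (|X i p.1| + |Y i p.2|))) Q := fun i =>
    (((hXi1 i).abs.add (hYi2 i).abs).const_mul C).const_mul _
  have hDi : ∀ θ i, Integrable (D θ i) Q := fun θ i =>
    (hBi i).mono' (hDm θ i).aestronglyMeasurable (ae_of_all _ (hDb θ i))
  have hφm : ∀ θ, Measurable (fun p => ∏ i, g (Z θ i p)) := fun θ =>
    Finset.measurable_fun_prod _ fun k _ => hgc.measurable.comp (hZm θ k)
  have hderiv : ∀ θ, HasDerivAt (fun θ => ∫ p, ∏ i, g (Z θ i p) ∂Q) (∫ p, ∑ i, D θ i p ∂Q) θ := by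
    intro θ
    refine (hasDerivAt_integral_of_dominated_loc_of_deriv_le (s := Set.univ)
      (bound := fun p => ∑ i, C ^ (Finset.univ.erase i).card * (C * (|X i p.1| + |Y i p.2|)))
      (F' := fun θ p => ∑ i, D θ i p)
      Filter.univ_mem (Eventually.of_forall fun θ => (hφm θ).aestronglyMeasurable) ?_ ?_ ?_ ?_ ?_).2
    · exact Integrable.of_bound (hφm θ).aestronglyMeasurable _
        (ae_of_all _ fun p => prod_bound _ _ C (fun i => hb _))
    · exact (Finset.measurable_fun_sum _ fun i _ => hDm θ i).aestronglyMeasurable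
    · refine ae_of_all _ fun p x _ => ?_
      exact (Finset.abs_sum_le_sum_abs _ _).trans (Finset.sum_le_sum fun i _ => hDb _ _ _)
    · exact integrable_finsetSum _ fun i _ => hBi i
    · refine ae_of_all _ fun p x _ => ?_
      have h1 : ∀ i, HasDerivAt (fun θ => g (Z θ i p)) (g' (Z x i p) * W x i p) x := by
        intro i
        refine (hg _).comp x ?_
        exact ((Real.hasDerivAt_cos x).mul_const _).add ((Real.hasDerivAt_sin x).mul_const _)
      exact HasDerivAt.fun_finsetProd (u := Finset.univ) (fun i _ => h1 i)
  have hnonneg : ∀ θ ∈ Set.Icc 0 (Real.pi / 2), 0 ≤ ∫ p, ∑ i, D θ i p ∂Q := by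
    intro θ hθ
    have hs : 0 ≤ Real.sin θ := Real.sin_nonneg_of_nonneg_of_le_pi hθ.1 (by linarith [hθ.2, Real.pi_pos])
    have hc : 0 ≤ Real.cos θ := Real.cos_nonneg_of_neg_pi_div_two_le_of_le (by linarith [hθ.1, Real.pi_pos]) hθ.2
    rw [integral_finsetSum _ fun i _ => hDi θ i]
    refine Finset.sum_nonneg fun i _ => ?_
    let u : ι → ℝ → ℝ := Function.update (fun _ => g) i g'
    let u' : ι → ℝ → ℝ := Function.update (fun _ => g') i g''
    have hui : u i = g' := by simp [u]
    have huk : ∀ k, k ≠ i → u k = g := fun k hk => by simp [u, hk]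
    have hui' : u' i = g'' := by simp [u']
    have huk' : ∀ k, k ≠ i → u' k = g' := fun k hk => by simp [u', hk]
    have hrw : ∀ p, D θ i p = W θ i p * ∏ k, u k (Z θ k p) := by
      intro p
      rw [← Finset.mul_prod_erase Finset.univ _ (Finset.mem_univ i), hui,
        Finset.prod_congr rfl (fun k hk => by rw [huk k (Finset.ne_of_mem_erase hk)])]
      simp only [D]; ring
    simp_rw [hrw]
    rw [stein_multi Q (W θ i) (Z θ) (hWZ θ i) (hW0 θ i) (hWm θ i) (hZm θ) u u' ?_ ?_ C ?_ ?_]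
    · refine Finset.sum_nonneg fun j _ => ?_
      rw [hcov]
      by_cases hji : j = i
      · subst hji
        rw [hdiag]; simp
      · refine mul_nonneg (mul_nonneg (mul_nonneg hs hc) (sub_nonneg.2 (hcomp i j))) ?_
        refine integral_nonneg fun p => ?_
        rw [huk' j hji]
        refine mul_nonneg_of_nonpos_of_nonpos ?_ (hneg _)
        rw [← Finset.mul_prod_erase _ _ (Finset.mem_erase.2 ⟨Ne.symm hji, Finset.mem_univ i⟩), hui]
        refine mul_nonpos_of_nonpos_of_nonneg (hneg _) (Finset.prod_nonneg fun k hk => ?_)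
        rw [huk k (Finset.ne_of_mem_erase hk)]
        exact hpos _
    all_goals intro k
    all_goals by_cases hk : k = i
    all_goals first | (subst hk; simp only [hui, hui']) | simp only [huk k hk, huk' k hk]
    all_goals assumption
  have hmono : MonotoneOn (fun θ => ∫ p, ∏ i, g (Z θ i p) ∂Q) (Set.Icc 0 (Real.pi / 2)) := by
    refine monotoneOn_of_deriv_nonneg (convex_Icc _ _)
      (fun θ _ => (hderiv θ).continuousAt.continuousWithinAt)
      (fun θ _ => (hderiv θ).differentiableAt.differentiableWithinAt) ?_
    intro θ hθ
    rw [(hderiv θ).deriv]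
    exact hnonneg θ (interior_subset hθ)
  have hfin := hmono (Set.left_mem_Icc.2 (by positivity)) (Set.right_mem_Icc.2 (by positivity))
    (by positivity : (0:ℝ) ≤ Real.pi / 2)
  simp only [Z, Real.cos_zero, Real.sin_zero, Real.cos_pi_div_two, Real.sin_pi_div_two, one_mul,
    zero_mul, add_zero, zero_add] at hfin
  rw [hQ, integral_fun_fst (fun ω => ∏ i, g (X i ω)), integral_fun_snd (fun ω => ∏ i, g (Y i ω))] at hfin
  simpa using hfin

lemma slepian_cdf {Ω : Type*} [MeasurableSpace Ω] (P : Measure Ω) [IsProbabilityMeasure P]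
    {ι : Type*} [Fintype ι] [DecidableEq ι] (X Y : ι → Ω → ℝ)
    (hXG : HasGaussianLaw (fun ω i => X i ω) P) (hYG : HasGaussianLaw (fun ω i => Y i ω) P)
    (hX0 : ∀ i, ∫ ω, X i ω ∂P = 0) (hY0 : ∀ i, ∫ ω, Y i ω ∂P = 0)
    (hXm : ∀ i, Measurable (X i)) (hYm : ∀ i, Measurable (Y i))
    (hcomp : ∀ i j, ∫ ω, X i ω * X j ω ∂P ≤ ∫ ω, Y i ω * Y j ω ∂P)
    (hdiag : ∀ i, ∫ ω, X i ω * X i ω ∂P = ∫ ω, Y i ω * Y i ω ∂P) (t : ℝ) :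
    P {ω | ∀ i, X i ω ≤ t} ≤ P {ω | ∀ i, Y i ω ≤ t} := by
  let g : ℕ → ℝ → ℝ := fun k x => Real.sigmoid ((k:ℝ) ^ 2 * (t - x) + k)
  have hstep : ∀ k, ∫ ω, ∏ i, g k (X i ω) ∂P ≤ ∫ ω, ∏ i, g k (Y i ω) ∂P := by
    intro k
    have hlin : ∀ x : ℝ, HasDerivAt (fun x : ℝ => (k:ℝ) ^ 2 * (t - x) + k) (-(k:ℝ) ^ 2) x := by
      intro x
      refine ((((hasDerivAt_id x).const_sub t).const_mul ((k:ℝ)^2)).add_const (k:ℝ)).congr_deriv ?_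
      ring
    have hg : ∀ x, HasDerivAt (g k) (-(k:ℝ)^2 * (g k x * (1 - g k x))) x := by
      intro x
      refine ((Real.hasDerivAt_sigmoid _).comp x (hlin x)).congr_deriv ?_
      simp only [g]; ring
    have hgc : Continuous (g k) := continuous_iff_continuousAt.2 fun x => (hg x).continuousAt
    have p0 : ∀ x, 0 ≤ g k x := fun x => Real.sigmoid_nonneg _
    have p1 : ∀ x, g k x ≤ 1 := fun x => Real.sigmoid_le_one _
    have p2 : ∀ x, 0 ≤ g k x * (1 - g k x) := fun x => mul_nonneg (p0 x) (by linarith [p1 x])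
    have p3 : ∀ x, g k x * (1 - g k x) ≤ 1 := fun x => by nlinarith [p0 x, p1 x]
    have k2 : 0 ≤ (k:ℝ) ^ 2 := by positivity
    refine slepian_fin P X Y hXG hYG hX0 hY0 hXm hYm hcomp hdiag (g k)
      (fun x => -(k:ℝ)^2 * (g k x * (1 - g k x)))
      (fun x => (k:ℝ)^4 * ((g k x * (1 - g k x)) * (1 - 2 * g k x)))
      hg ?_ (by fun_prop) (1 + (k:ℝ)^2 + (k:ℝ)^4) ?_ ?_ ?_ p0 ?_
    · intro x
      refine (((hg x).mul ((hg x).const_sub 1)).const_mul (-(k:ℝ)^2)).congr_deriv ?_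
      ring
    · intro x
      rw [abs_of_nonneg (p0 x)]
      have : 0 ≤ (k:ℝ)^4 := by positivity
      linarith [p1 x]
    · intro x
      rw [abs_mul, abs_neg, abs_of_nonneg k2, abs_of_nonneg (p2 x)]
      have : 0 ≤ (k:ℝ)^4 := by positivity
      nlinarith [p3 x]
    · intro x
      have k4 : 0 ≤ (k:ℝ)^4 := by positivity
      rw [abs_mul, abs_mul, abs_of_nonneg k4, abs_of_nonneg (p2 x)]
      have h1 : |1 - 2 * g k x| ≤ 1 := abs_le.2 ⟨by linarith [p1 x], by linarith [p0 x]⟩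
      have h2 : g k x * (1 - g k x) * |1 - 2 * g k x| ≤ 1 :=
        mul_le_one₀ (p3 x) (abs_nonneg _) h1
      nlinarith
    · intro x
      nlinarith [p2 x]
  have hpt : ∀ x, Tendsto (fun k => g k x) atTop (nhds (if x ≤ t then 1 else 0)) := by
    intro x
    have hk : Tendsto (fun k : ℕ => (k:ℝ)) atTop atTop := tendsto_natCast_atTop_atTop
    split_ifs with hx
    · refine Real.tendsto_sigmoid_atTop.comp (tendsto_atTop_mono (fun k => ?_) hk)
      have : 0 ≤ (k:ℝ)^2 * (t - x) := mul_nonneg (by positivity) (by linarith)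
      linarith
    · push Not at hx
      refine Real.tendsto_sigmoid_atBot.comp ?_
      have h1 : Tendsto (fun k : ℕ => (k:ℝ) * (t - x) + 1) atTop atBot :=
        tendsto_atBot_add_const_right _ _ (hk.atTop_mul_const_of_neg (by linarith))
      refine (hk.atTop_mul_atBot₀ h1).congr fun k => ?_
      ring
  have hlim : ∀ X : ι → Ω → ℝ, (∀ i, Measurable (X i)) →
      Tendsto (fun k => ∫ ω, ∏ i, g k (X i ω) ∂P) atTop (nhds (P.real {ω | ∀ i, X i ω ≤ t})) := by
    intro X hXm
    have hms : MeasurableSet {ω | ∀ i, X i ω ≤ t} := by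
      rw [Set.ofPred_forall]
      exact MeasurableSet.iInter fun i => measurableSet_le (hXm i) measurable_const
    rw [← integral_indicator_one hms]
    refine tendsto_integral_of_dominated_convergence (fun _ => 1) ?_ (integrable_const _) ?_ ?_
    · intro k
      have hc : Continuous (g k) := continuous_sigmoid.comp (by fun_prop)
      exact (Finset.measurable_fun_prod _ fun i _ =>
        hc.measurable.comp (hXm i)).aestronglyMeasurable
    · refine fun k => ae_of_all _ fun ω => ?_
      have := prod_bound Finset.univ (fun i => g k (X i ω)) 1 (fun i => by
        rw [abs_of_nonneg (Real.sigmoid_nonneg _)]; exact Real.sigmoid_le_one _)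
      rw [one_pow] at this
      exact this
    · refine ae_of_all _ fun ω => ?_
      have h1 := tendsto_finsetProd (Finset.univ : Finset ι) (fun i _ => hpt (X i ω))
      rw [Finset.prod_boole] at h1
      convert h1 using 2
      simp [Set.indicator]
  have := le_of_tendsto_of_tendsto' (hlim X hXm) (hlim Y hYm) hstep
  rwa [measureReal_def, measureReal_def, ENNReal.toReal_le_toReal (measure_ne_top _ _) (measure_ne_top _ _)] at this

lemma stoch_dom (μ ν : Measure ℝ) [IsProbabilityMeasure μ] [IsProbabilityMeasure ν]
    (h : ∀ t, ν (Set.Iic t) ≤ μ (Set.Iic t)) (F : ℝ → ℝ) (hF : Monotone F)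
    (hb : ∃ C : ℝ, ∀ x, |F x| ≤ C) : ∫ x, F x ∂μ ≤ ∫ x, F x ∂ν := by
  obtain ⟨C, hC⟩ := hb
  have hIoi : ∀ t, μ (Set.Ioi t) ≤ ν (Set.Ioi t) := by
    intro t
    rw [← Set.compl_Iic, prob_compl_eq_one_sub measurableSet_Iic, prob_compl_eq_one_sub measurableSet_Iic]
    exact tsub_le_tsub_left (h t) _
  have hIci : ∀ t, μ (Set.Ici t) ≤ ν (Set.Ici t) := by
    intro t
    have hset : Set.Ici t = ⋂ n : ℕ, Set.Ioi (t - 1 / ((n:ℝ) + 1)) := by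
      ext x
      simp only [Set.mem_Ici, Set.mem_iInter, Set.mem_Ioi]
      constructor
      · intro hx n
        have : 0 < 1 / ((n:ℝ) + 1) := by positivity
        linarith
      · intro hx
        refine le_of_forall_pos_lt_add fun ε hε => ?_
        obtain ⟨n, hn⟩ := exists_nat_one_div_lt hε
        linarith [hx n]
    have hanti : Antitone (fun n : ℕ => Set.Ioi (t - 1 / ((n:ℝ) + 1))) := by
      intro n m hnm
      refine Set.Ioi_subset_Ioi ?_
      have := Nat.one_div_le_one_div (α := ℝ) hnm
      linarith
    rw [hset]
    exact le_of_tendsto_of_tendsto'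
      (tendsto_measure_iInter_atTop (fun _ => measurableSet_Ioi.nullMeasurableSet) hanti ⟨0, measure_ne_top _ _⟩)
      (tendsto_measure_iInter_atTop (fun _ => measurableSet_Ioi.nullMeasurableSet) hanti ⟨0, measure_ne_top _ _⟩)
      (fun n => hIoi _)
  have hU : ∀ U : Set ℝ, IsUpperSet U → μ U ≤ ν U := by
    intro U hU
    rcases U.eq_empty_or_nonempty with rfl | hne
    · simp
    by_cases hbd : BddBelow U
    · have hsub : Set.Ioi (sInf U) ⊆ U := by
        intro x hx
        obtain ⟨y, hy, hyx⟩ := exists_lt_of_csInf_lt hne hx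
        exact hU hyx.le hy
      have hsub2 : U ⊆ Set.Ici (sInf U) := fun x hx => csInf_le hbd hx
      by_cases ha : sInf U ∈ U
      · have : U = Set.Ici (sInf U) :=
          Set.Subset.antisymm hsub2 fun x hx => hU hx ha
        rw [this]; exact hIci _
      · have : U = Set.Ioi (sInf U) := Set.Subset.antisymm
          (fun x hx => lt_of_le_of_ne (hsub2 hx) (fun e : sInf U = x => ha (by rw [e]; exact hx))) hsub
        rw [this]; exact hIoi _
    · have : U = Set.univ := by
        refine Set.eq_univ_of_forall fun x => ?_
        rw [not_bddBelow_iff] at hbd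
        obtain ⟨y, hy, hyx⟩ := hbd x
        exact hU hyx.le hy
      rw [this]; simp
  have hFm : Measurable F := hF.measurable
  have hGm : Measurable (fun x => F x + C) := hFm.add_const _
  have hnn : ∀ x, 0 ≤ F x + C := fun x => by linarith [(abs_le.1 (hC x)).1]
  have hi : ∀ (ρ : Measure ℝ) [IsProbabilityMeasure ρ], Integrable F ρ := fun ρ _ =>
    Integrable.of_bound hFm.aestronglyMeasurable C (ae_of_all _ hC)
  have hl : ∫⁻ x, ENNReal.ofReal (F x + C) ∂μ ≤ ∫⁻ x, ENNReal.ofReal (F x + C) ∂ν := by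
    rw [lintegral_eq_lintegral_meas_lt μ (ae_of_all _ hnn) hGm.aemeasurable,
      lintegral_eq_lintegral_meas_lt ν (ae_of_all _ hnn) hGm.aemeasurable]
    refine lintegral_mono fun s => hU _ ?_
    intro x y hxy hx
    simp only [Set.mem_ofPred_eq] at hx ⊢
    linarith [hF hxy]
  have hfin : ∫⁻ x, ENNReal.ofReal (F x + C) ∂ν ≠ ⊤ :=
    ((hi ν).add (integrable_const C)).lintegral_lt_top.ne
  have := ENNReal.toReal_mono hfin hl
  rw [← integral_eq_lintegral_of_nonneg_ae (ae_of_all _ hnn) hGm.aestronglyMeasurable,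
    ← integral_eq_lintegral_of_nonneg_ae (ae_of_all _ hnn) hGm.aestronglyMeasurable,
    integral_add (hi μ) (integrable_const _), integral_add (hi ν) (integrable_const _)] at this
  simpa using this

lemma sup_facts {E : Type*} [TopologicalSpace E] {A : Set E} (hA : IsCompact A) (hne : A.Nonempty)
    (q : ℕ → A) (hq : DenseRange q) (f : E → ℝ) (hf : ContinuousOn f A) :
    (∀ t, sSup (f '' A) ≤ t ↔ ∀ n, f (q n) ≤ t) ∧ sSup (f '' A) = ⨆ n, f (q n) := by
  have hbdd : BddAbove (f '' A) := hA.bddAbove_image hf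
  have h1 : ∀ t, sSup (f '' A) ≤ t ↔ ∀ n, f (q n) ≤ t := by
    intro t
    constructor
    · intro h n
      exact (le_csSup hbdd ⟨q n, (q n).2, rfl⟩).trans h
    · intro h
      refine csSup_le (hne.image _) ?_
      rintro _ ⟨x, hx, rfl⟩
      have hc : Continuous (A.domRestrict f) := hf.domRestrict
      exact hq.induction_on (p := fun y : A => A.domRestrict f y ≤ t) ⟨x, hx⟩
        (isClosed_le hc continuous_const) h
  refine ⟨h1, ?_⟩
  have hb2 : BddAbove (Set.range fun n => f (q n)) := by
    refine hbdd.mono ?_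
    rintro _ ⟨n, rfl⟩
    exact ⟨q n, (q n).2, rfl⟩
  refine eq_of_forall_ge_iff fun t => ?_
  rw [h1, ciSup_le_iff hb2]

lemma gauss_of_comb {Ω E : Type*} [MeasurableSpace Ω] (P : Measure Ω) [IsProbabilityMeasure P]
    (A : Set E) (X : E → Ω → ℝ) (hXmeas : ∀ r, Measurable (X r))
    (hXgauss : ∀ (n : ℕ) (c : Fin n → ℝ) (r : Fin n → E),
      (∀ i, r i ∈ A) → ∃ v : NNReal,
        Measure.map (fun ω => ∑ i, c i * X (r i) ω) P = gaussianReal 0 v)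
    (n : ℕ) (r : Fin n → E) (hr : ∀ i, r i ∈ A) :
    HasGaussianLaw (fun ω i => X (r i) ω) P ∧ ∀ i, ∫ ω, X (r i) ω ∂P = 0 := by
  have hm : Measurable (fun ω i => X (r i) ω) := measurable_pi_lambda _ fun i => hXmeas _
  constructor
  · constructor
    refine isGaussian_of_map_eq_gaussianReal fun L => ?_
    obtain ⟨v, hv⟩ := hXgauss n (fun i => L (Pi.single i 1)) r hr
    refine ⟨0, v, ?_⟩
    rw [Measure.map_map (by fun_prop) hm, ← hv]
    congr 1
    ext ω
    simp only [Function.comp]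
    conv_lhs => rw [pi_eq_sum_univ' (fun i => X (r i) ω), map_sum]
    refine Finset.sum_congr rfl fun i _ => ?_
    rw [map_smul, smul_eq_mul, mul_comm]
  · intro i
    obtain ⟨v, hv⟩ := hXgauss 1 (fun _ => 1) (fun _ => r i) (fun _ => hr i)
    simp only [Finset.univ_unique, Finset.sum_singleton, one_mul] at hv
    have h1 : ∫ x, x ∂(P.map (X (r i))) = ∫ ω, X (r i) ω ∂P :=
      integral_map (hXmeas _).aemeasurable (by fun_prop)
    rw [← h1]
    have : P.map (X (r i)) = gaussianReal 0 v := hv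
    rw [this, integral_id_gaussianReal]

theorem slepian_comparison
    {d : ℕ} {Ω : Type*} [m0 : MeasurableSpace Ω] (P : Measure Ω) [IsProbabilityMeasure P]
    (A : Set (EuclideanSpace ℝ (Fin d))) (hA : IsCompact A)
    (X Y : EuclideanSpace ℝ (Fin d) → Ω → ℝ)
    (hXmeas : ∀ r, Measurable (X r)) (hYmeas : ∀ r, Measurable (Y r))
    (hXcont : ∀ᵐ ω ∂P, ContinuousOn (fun r => X r ω) A)
    (hYcont : ∀ᵐ ω ∂P, ContinuousOn (fun r => Y r ω) A)
    (hXgauss : ∀ (n : ℕ) (c : Fin n → ℝ) (r : Fin n → EuclideanSpace ℝ (Fin d)),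
      (∀ i, r i ∈ A) → ∃ v : NNReal,
        Measure.map (fun ω => ∑ i, c i * X (r i) ω) P = gaussianReal 0 v)
    (hYgauss : ∀ (n : ℕ) (c : Fin n → ℝ) (r : Fin n → EuclideanSpace ℝ (Fin d)),
      (∀ i, r i ∈ A) → ∃ v : NNReal,
        Measure.map (fun ω => ∑ i, c i * Y (r i) ω) P = gaussianReal 0 v)
    (hkXcont : ContinuousOn
      (fun p : EuclideanSpace ℝ (Fin d) × EuclideanSpace ℝ (Fin d) =>
        ∫ ω, X p.1 ω * X p.2 ω ∂P) (A ×ˢ A))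
    (hkYcont : ContinuousOn
      (fun p : EuclideanSpace ℝ (Fin d) × EuclideanSpace ℝ (Fin d) =>
        ∫ ω, Y p.1 ω * Y p.2 ω ∂P) (A ×ˢ A))
    (hcomp : ∀ u ∈ A, ∀ v ∈ A, ∫ ω, X u ω * X v ω ∂P ≤ ∫ ω, Y u ω * Y v ω ∂P)
    (hdiag : ∀ u ∈ A, ∫ ω, X u ω * X u ω ∂P = ∫ ω, Y u ω * Y u ω ∂P)
    (F : ℝ → ℝ) (hFmono : Monotone F) (hFbdd : ∃ C : ℝ, ∀ x, |F x| ≤ C) :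
    ∫ ω, F (sSup ((fun x => Y x ω) '' A)) ∂P ≤ ∫ ω, F (sSup ((fun x => X x ω) '' A)) ∂P := by
  rcases A.eq_empty_or_nonempty with rfl | hne
  · simp
  have : Nonempty A := hne.to_subtype
  let q : ℕ → A := TopologicalSpace.denseSeq A
  have hq : DenseRange q := TopologicalSpace.denseRange_denseSeq A
  have haem : ∀ X : EuclideanSpace ℝ (Fin d) → Ω → ℝ, (∀ r, Measurable (X r)) →
      (∀ᵐ ω ∂P, ContinuousOn (fun r => X r ω) A) →
      AEMeasurable (fun ω => sSup ((fun x => X x ω) '' A)) P := by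
    intro X hXm hXc
    refine ⟨fun ω => ⨆ n, X (q n) ω, Measurable.iSup fun n => hXm _, ?_⟩
    filter_upwards [hXc] with ω hω
    exact (sup_facts hA hne q hq _ hω).2
  have hlim : ∀ X : EuclideanSpace ℝ (Fin d) → Ω → ℝ, (∀ r, Measurable (X r)) →
      (∀ᵐ ω ∂P, ContinuousOn (fun r => X r ω) A) → ∀ t,
      Tendsto (fun n : ℕ => P {ω | ∀ i : Fin n, X (q i) ω ≤ t}) atTop
        (nhds (P {ω | sSup ((fun x => X x ω) '' A) ≤ t})) := by
    intro X hXm hXc t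
    have hset : P {ω | sSup ((fun x => X x ω) '' A) ≤ t} =
        P (⋂ n : ℕ, {ω | ∀ i : Fin n, X (q i) ω ≤ t}) := by
      refine measure_congr ?_
      filter_upwards [hXc] with ω hω
      refine propext ?_
      change sSup ((fun x => X x ω) '' A) ≤ t ↔ ω ∈ ⋂ n : ℕ, {ω | ∀ i : Fin n, X (q i) ω ≤ t}
      rw [(sup_facts hA hne q hq _ hω).1 t]
      simp only [Set.mem_iInter, Set.mem_ofPred_eq]
      exact ⟨fun h n i => h i, fun h n => h (n + 1) ⟨n, Nat.lt_succ_self n⟩⟩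
    rw [hset]
    refine tendsto_measure_iInter_atTop (fun n => ?_) ?_ ⟨0, measure_ne_top _ _⟩
    · rw [Set.ofPred_forall]
      exact (MeasurableSet.iInter fun i : Fin n =>
        measurableSet_le (hXm _) measurable_const).nullMeasurableSet
    · intro n m hnm ω hω i
      exact hω ⟨i, i.2.trans_le hnm⟩
  have hcdf : ∀ t, P {ω | sSup ((fun x => X x ω) '' A) ≤ t} ≤
      P {ω | sSup ((fun x => Y x ω) '' A) ≤ t} := by
    intro t
    refine le_of_tendsto_of_tendsto' (hlim X hXmeas hXcont t) (hlim Y hYmeas hYcont t) fun n => ?_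
    obtain ⟨gX, mX⟩ := gauss_of_comb P A X hXmeas hXgauss n (fun i => q i) (fun i => (q i).2)
    obtain ⟨gY, mY⟩ := gauss_of_comb P A Y hYmeas hYgauss n (fun i => q i) (fun i => (q i).2)
    exact slepian_cdf P (fun i : Fin n => X (q i)) (fun i : Fin n => Y (q i)) gX gY mX mY
      (fun i => hXmeas _) (fun i => hYmeas _)
      (fun i j => hcomp _ (q i).2 _ (q j).2) (fun i => hdiag _ (q i).2) t
  have aX := haem X hXmeas hXcont
  have aY := haem Y hYmeas hYcont
  have : IsProbabilityMeasure (P.map (fun ω => sSup ((fun x => X x ω) '' A))) :=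
    Measure.isProbabilityMeasure_map aX
  have : IsProbabilityMeasure (P.map (fun ω => sSup ((fun x => Y x ω) '' A))) :=
    Measure.isProbabilityMeasure_map aY
  have key := stoch_dom (P.map (fun ω => sSup ((fun x => Y x ω) '' A)))
    (P.map (fun ω => sSup ((fun x => X x ω) '' A))) (fun t => by
      rw [Measure.map_apply_of_aemeasurable aX measurableSet_Iic,
        Measure.map_apply_of_aemeasurable aY measurableSet_Iic]
      exact hcdf t) F hFmono hFbdd
  rwa [integral_map aY hFmono.measurable.aestronglyMeasurable,
    integral_map aX hFmono.measurable.aestronglyMeasurable] at key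
end
end
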